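/- arXiv:math/9204236 — 3 statements merged into one kernel-verified Lean document; each statement's English description precedes it below -/
import Mathlib

section
/- (A_ℓ Bailey Transform, second orthogonality relation.) Let ℓ ≥ 1, let q, a, x_1, …, x_ℓ be nonzero complex numbers such that every q-shifted factorial occurring in a denominator below is nonzero. With M(i;j) := ∏_{r,s=1}^{ℓ} ((q x_r/x_s) q^{j_r−j_s}; q)_{i_r−j_r}^{−1} · ∏_{k=1}^{ℓ} (a q x_k/x_ℓ; q)_{i_k+(j_1+⋯+j_ℓ)}^{−1} and M*(i;j) := ∏_{k=1}^{ℓ} [1 − a (x_k/x_ℓ) q^{i_k+(i_1+⋯+i_ℓ)}] · ∏_{k=1}^{ℓ} (a q x_k/x_ℓ; q)_{j_k+(i_1+⋯+i_ℓ)−1} · ∏_{r,s=1}^{ℓ} ((q x_r/x_s) q^{j_r−j_s}; q)_{i_r−j_r}^{−1} · (−1)^{|i|−|j|} q^{binom(|i|−|j|,2)}, for all vectors i, j of nonnegative integers of length ℓ, the sum over all vectors y with j_k ≤ y_k ≤ i_k for k = 1, …, ℓ of M*(i;y)·M(y;j) equals ∏_{k=1}^{ℓ} δ(i_k, j_k),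 where δ(r,s) = 1 if r = s and 0 otherwise. (Together with the first orthogonality relation this says M and M* are mutually inverse infinite lower-triangular matrices.) -/
set_option autoImplicit false
set_option maxHeartbeats 1000000

open Finset

/-- The `q`-shifted factorial `(a; q)_n`, extended to all integers `n` by the
standard convention `(a;q)_{-m} = 1 / ∏_{k=1}^{m} (1 - a q^{-k})`. -/
noncomputable def qp (a q : ℂ) (n : ℤ) : ℂ :=
  if 0 ≤ n then ∏ k ∈ Finset.range n.toNat, (1 - a * q ^ (k : ℤ))
  else (∏ k ∈ Finset.range (-n).toNat, (1 - a * q ^ (-(k : ℤ) - 1)))⁻¹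

/-- The `A_ℓ` Bailey transform matrix `M(i;j)`; `xl` denotes `x_ℓ`. -/
noncomputable def MA (ℓ : ℕ) (q a : ℂ) (x : Fin ℓ → ℂ) (xl : ℂ)
    (i j : Fin ℓ → ℕ) : ℂ :=
  (∏ r, ∏ s,
    (qp (q * (x r / x s) * q ^ ((j r : ℤ) - (j s : ℤ))) q ((i r : ℤ) - (j r : ℤ)))⁻¹) *
  ∏ k, (qp (a * q * (x k / xl)) q ((i k : ℤ) + ∑ s, (j s : ℤ)))⁻¹

/-- The `A_ℓ` Bailey transform matrix `M*(i;j)`; `xl` denotes `x_ℓ`. -/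
noncomputable def MAstar (ℓ : ℕ) (q a : ℂ) (x : Fin ℓ → ℂ) (xl : ℂ)
    (i j : Fin ℓ → ℕ) : ℂ :=
  (∏ k, (1 - a * (x k / xl) * q ^ ((i k : ℤ) + ∑ s, (i s : ℤ)))) *
  (∏ k, qp (a * q * (x k / xl)) q ((j k : ℤ) + (∑ s, (i s : ℤ)) - 1)) *
  (∏ r, ∏ s,
    (qp (q * (x r / x s) * q ^ ((j r : ℤ) - (j s : ℤ))) q ((i r : ℤ) - (j r : ℤ)))⁻¹) *
  (-1 : ℂ) ^ ((∑ s, (i s : ℤ)) - ∑ s, (j s : ℤ)) *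
  q ^ (((∑ s, (i s : ℤ)) - ∑ s, (j s : ℤ)) *
        ((∑ s, (i s : ℤ)) - (∑ s, (j s : ℤ)) - 1) / 2)

/-!
Put `X k = x k * q ^ j k` and give each `k` a block of nodes `X k * q ^ m`, `0 ≤ m ≤ i k - j k`, so
that `y = j + w` selects the node `X k * q ^ w k` in every block. By Milne's fundamental lemma, the
`q`-factorials of `M*(i;y) M(y;j)` with arguments `q x r / x s` are, up to a factor free of `y`, the
Vandermonde determinant of the selected nodes times the product of their nodal weights among all the
nodes. The remaining `q`-factorials cancel to `∏ k, P(X k * q ^ w k)` for one polynomial `P` of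
degree `|i| - |j| - 1`. Summed over `w`, these determinants assemble by multilinearity into one
determinant, whose rows add up to divided differences of polynomials of too small degree, so it
vanishes unless `i = j`.
-/

section HomQPochhammer

open Polynomial

variable {R : Type*} [CommRing R]

/-- The homogeneous `q`-shifted factorial `∏_{m < n} (A - B q^m) = Aⁿ (B/A; q)_n`: clearing
the denominators of `(B/A; q)_n` makes its identities polynomial, valid in any commutative ring. -/
def homQPochhammer (q A B : R) (n : ℕ) : R :=
  ∏ m ∈ range n, (A - B * q ^ m)

@[simp]
lemma homQPochhammer_zero (q A B : R) : homQPochhammer q A B 0 = 1 :=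
  prod_range_zero _

lemma homQPochhammer_succ (q A B : R) (n : ℕ) :
    homQPochhammer q A B (n + 1) = homQPochhammer q A B n * (A - B * q ^ n) :=
  prod_range_succ _ n

lemma homQPochhammer_succ' (q A B : R) (n : ℕ) :
    homQPochhammer q A B (n + 1) = (A - B) * homQPochhammer q A (B * q) n := by
  simp only [homQPochhammer, prod_range_succ', pow_zero, mul_one, pow_succ', mul_assoc, mul_comm,
    mul_left_comm]

lemma homQPochhammer_add (q A B : R) (m n : ℕ) :
    homQPochhammer q A B (m + n) = homQPochhammer q A B m * homQPochhammer q A (B * q ^ m) n := by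
  simp only [homQPochhammer, prod_range_add, pow_add, mul_assoc]

lemma homQPochhammer_mul_mul (q A B c : R) (n : ℕ) :
    homQPochhammer q (A * c) (B * c) n = c ^ n * homQPochhammer q A B n := by
  rw [homQPochhammer, homQPochhammer, pow_eq_prod_const, ← prod_mul_distrib]
  exact prod_congr rfl fun m _ => by ring

lemma map_homQPochhammer {S : Type*} [CommRing S] (f : R →+* S) (q A B : R) (n : ℕ) :
    f (homQPochhammer q A B n) = homQPochhammer (f q) (f A) (f B) n := by
  simp [homQPochhammer]

lemma homQPochhammer_mul_pow_self (q A : R) (n : ℕ) :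
    homQPochhammer q (A * q ^ n) A n =
      (-1) ^ n * q ^ n.choose 2 * homQPochhammer q A (A * q) n := by
  induction n with
  | zero => simp
  | succ n ih =>
    rw [homQPochhammer_succ', pow_succ q, ← mul_assoc A, homQPochhammer_mul_mul, ih,
      homQPochhammer_succ, Nat.choose_succ_succ' n 1, Nat.choose_one_right]
    ring

lemma homQPochhammer_mul_pow_mul_homQPochhammer_mul_pow (q A B : R) (s t : ℕ) :
    (B * q ^ t - A * q ^ s) *
        (homQPochhammer q (A * q ^ s) B t * homQPochhammer q (B * q ^ t) A s) =
      q ^ (t * s) * (B - A) *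
        (homQPochhammer q A (B * q) t * homQPochhammer q B (A * q) s) := by
  induction t with
  | zero =>
    have h := (homQPochhammer_succ q B A s).symm.trans (homQPochhammer_succ' q B A s)
    simp only [homQPochhammer_zero, zero_mul, pow_zero, mul_one, one_mul]
    linear_combination h
  | succ t ih =>
    have h := (homQPochhammer_succ q (B * q ^ (t + 1)) A s).symm.trans
      (homQPochhammer_succ' q (B * q ^ (t + 1)) A s)
    rw [pow_succ q t, ← mul_assoc B, homQPochhammer_mul_mul] at h
    rw [homQPochhammer_succ, homQPochhammer_succ, pow_succ q t, ← mul_assoc B, add_mul, one_mul,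
      pow_add]
    linear_combination homQPochhammer q (A * q ^ s) B t * (A * q ^ s - B * q ^ t) * h +
      q ^ s * (A - B * q ^ t * q) * ih

lemma eval_homQPochhammer_C_mul_X (q A b z : R) (n : ℕ) :
    (homQPochhammer (C q) (C A) (C b * X) n).eval z = homQPochhammer q A (b * z) n := by
  refine (map_homQPochhammer (evalRingHom z) _ _ _ _).trans ?_
  simp only [coe_evalRingHom, eval_C, eval_mul, eval_X]

lemma natDegree_homQPochhammer_C_mul_X_le (q A b : R) (n : ℕ) :
    (homQPochhammer (C q) (C A) (C b * X) n).natDegree ≤ n := by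
  have hfactor (m : ℕ) : (C A - C b * X * C q ^ m).natDegree ≤ 1 := by compute_degree
  have h := (natDegree_prod_le _ _).trans (sum_le_card_nsmul (range n) _ 1 fun m _ => hfactor m)
  rwa [card_range, smul_eq_mul, mul_one] at h

end HomQPochhammer

section Combinatorics

lemma choose_two_add (a b : ℕ) : (a + b).choose 2 = a.choose 2 + a * b + b.choose 2 := by
  qify
  simp only [Nat.cast_choose_two, Nat.cast_add]
  ring

lemma sum_choose_two_add_sum_Ioi {ℓ : ℕ} (w : Fin ℓ → ℕ) :
    ∑ i, (w i).choose 2 + ∑ i, ∑ j ∈ Ioi i, w j * w i = (∑ i, w i).choose 2 := by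
  induction ℓ with
  | zero => simp
  | succ ℓ ih =>
    simp only [Fin.sum_univ_succ, Fin.sum_Ioi_zero, Fin.sum_Ioi_succ, choose_two_add, ← ih,
      ← sum_mul]
    ring

lemma sum_card_Ioi (ℓ : ℕ) : ∑ i : Fin ℓ, #(Ioi i) = ℓ.choose 2 := by
  simpa using sum_choose_two_add_sum_Ioi fun _ : Fin ℓ => 1

lemma prod_erase_sigma_range {ι M : Type*} [Fintype ι] [DecidableEq ι] [CommMonoid M]
    (w u : ι → ℕ) (s : ι) (f : ι → ℕ → M) :
    ∏ z ∈ (univ.sigma fun r => range (w r + 1 + u r)).erase ⟨s, w s⟩, f z.1 z.2 =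
      (∏ r, ∏ m ∈ range (w r), f r m) * (∏ r ∈ {s}ᶜ, f r (w r)) *
        ∏ r, ∏ m ∈ range (u r), f r (w r + 1 + m) := by
  let f' : (Σ _ : ι, ℕ) → M := Function.update (fun z => f z.1 z.2) ⟨s, w s⟩ 1
  have hf' (r : ι) (m : ℕ) (h : r = s → m ≠ w s) : f' ⟨r, m⟩ = f r m :=
    Function.update_of_ne (by rintro ⟨⟩; exact h rfl rfl) _ _
  have hpivot : ∏ r, f' ⟨r, w r⟩ = ∏ r ∈ {s}ᶜ, f r (w r) := by
    rw [Fintype.prod_eq_mul_prod_compl s, show f' ⟨s, w s⟩ = 1 from Function.update_self ..,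
      one_mul]
    exact prod_congr rfl fun r hr => hf' r _ fun h => absurd h (by simpa using hr)
  calc
    _ = ∏ z ∈ (univ.sigma fun r => range (w r + 1 + u r)).erase ⟨s, w s⟩, f' z :=
      (prod_update_of_notMem (notMem_erase _ _) _ _).symm
    _ = ∏ r, ∏ m ∈ range (w r + 1 + u r), f' ⟨r, m⟩ := by
      rw [prod_erase (f := f') _ (Function.update_self ..), prod_sigma]
    _ = (∏ r, ∏ m ∈ range (w r), f' ⟨r, m⟩) * (∏ r, f' ⟨r, w r⟩) *
        ∏ r, ∏ m ∈ range (u r), f' ⟨r, w r + 1 + m⟩ := by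
      simp only [prod_range_add, prod_range_succ, prod_mul_distrib]
    _ = _ := by
      rw [hpivot]
      congr! 5 with r _ m hm r _ m
      · exact hf' r m (by rintro rfl; exact (mem_range.mp hm).ne)
      · exact hf' r _ (by rintro rfl; omega)

end Combinatorics

section Determinant

open Matrix

lemma prod_compl_singleton_sub {R : Type*} [CommRing R] {ℓ : ℕ} (v : Fin ℓ → R) :
    ∏ s, ∏ r ∈ {s}ᶜ, (v s - v r) = (-1) ^ ℓ.choose 2 * (vandermonde v).det ^ 2 := by
  rw [← prod_prod_Ioi_mul_eq_prod_prod_off_diag (fun r s => v s - v r), ← sum_card_Ioi,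
    ← prod_pow_eq_pow_sum, det_vandermonde, ← prod_pow, ← prod_mul_distrib]
  refine prod_congr rfl fun i _ => ?_
  rw [← prod_pow, ← prod_const, ← prod_mul_distrib]
  exact prod_congr rfl fun j _ => by ring

lemma sum_eval_mul_nodalWeight_eq_zero {F ι : Type*} [Field F] [DecidableEq ι] {s : Finset ι}
    {v : ι → F} (hv : Set.InjOn v s) {P : Polynomial F} (hP : P.natDegree + 1 < #s) :
    ∑ z ∈ s, P.eval (v z) * Lagrange.nodalWeight s v z = 0 := by
  have h := Lagrange.coeff_eq_sum hv <|
    Polynomial.degree_le_natDegree.trans_lt (Nat.cast_lt.mpr (by omega : P.natDegree < #s))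
  rw [Polynomial.coeff_eq_zero_of_natDegree_lt (by omega)] at h
  simp only [h, Lagrange.nodalWeight, prod_inv_distrib, div_eq_mul_inv]

/-- The rows of the matrix of block sums of `P(v) v^e` times the nodal weight add up to divided
differences of polynomials of too small degree, so its determinant vanishes; expanding that
determinant by multilinearity gives the sum over all choices of one node in each block. -/
theorem sum_piFinset_eval_mul_det_vandermonde_mul_nodalWeight_eq_zero {F : Type*} [Field F] {ℓ : ℕ}
    {κ : Fin ℓ → Type*} [∀ k, DecidableEq (κ k)] (T : ∀ k, Finset (κ k)) {v : (Σ k, κ k) → F}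
    (hv : Set.InjOn v (univ.sigma T : Finset (Σ k, κ k))) {P : Polynomial F}
    (hP : P.natDegree + ℓ < ∑ k, #(T k)) :
    ∑ w ∈ Fintype.piFinset T, (∏ k, P.eval (v ⟨k, w k⟩)) *
      ((vandermonde fun k => v ⟨k, w k⟩).det *
        ∏ k, Lagrange.nodalWeight (univ.sigma T) v ⟨k, w k⟩) = 0 := by
  let c (z : Σ k, κ k) : F := P.eval (v z) * Lagrange.nodalWeight (univ.sigma T) v z
  let row (k : Fin ℓ) (m : κ k) (e : Fin ℓ) : F := c ⟨k, m⟩ * v ⟨k, m⟩ ^ (e : ℕ)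
  have hcol (e : Fin ℓ) : ∑ k, ∑ m ∈ T k, row k m e = 0 := by
    have hdeg : (P * Polynomial.X ^ (e : ℕ)).natDegree + 1 < #(univ.sigma T) := by
      rw [card_sigma]
      have := P.natDegree_mul_le (q := Polynomial.X ^ (e : ℕ))
      rw [Polynomial.natDegree_X_pow] at this
      omega
    rw [← sum_sigma univ T fun z => row z.1 z.2 e, ← sum_eval_mul_nodalWeight_eq_zero hv hdeg]
    refine sum_congr rfl fun z _ => ?_
    simp only [row, c, Polynomial.eval_mul, Polynomial.eval_pow, Polynomial.eval_X]
    ring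
  have hdet : (of fun k => ∑ m ∈ T k, row k m).det = 0 := by
    rcases ℓ with _ | ℓ
    · simp at hP
    · refine exists_vecMul_eq_zero_iff.mp ⟨1, one_ne_zero, funext fun e => ?_⟩
      simpa [vecMul, dotProduct] using hcol e
  calc
    _ = ∑ w ∈ Fintype.piFinset T, (of fun k => row k (w k)).det := by
      refine sum_congr rfl fun w _ => ?_
      have h := det_mul_column (fun k => c ⟨k, w k⟩) (vandermonde fun k => v ⟨k, w k⟩)
      rw [prod_mul_distrib] at h
      exact (by ring : _ = _).trans h.symm
    _ = (of fun k => ∑ m ∈ T k, row k m).det :=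
      ((detRowAlternating (R := F) (n := Fin ℓ)).toMultilinearMap.map_sum_finset row T).symm
    _ = 0 := hdet

end Determinant

section CrossQPochhammer

open Matrix

/-- The denominator `∏_{r,s} (q X_r / X_s; q)_{n_r}` of an `A_ℓ` series, made homogeneous: the
factor at `(r, s)` is multiplied by `X_s ^ n_r`. -/
def crossQPochhammer {R : Type*} [CommRing R] {ℓ : ℕ} (q : R) (X : Fin ℓ → R) (n : Fin ℓ → ℕ) : R :=
  ∏ r, ∏ s, homQPochhammer q (X s) (X r * q) (n r)

/-- Milne's fundamental lemma: the diagonal factors and the pairs of off-diagonal factors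
`(r, s)`, `(s, r)` are reversed separately, each pair releasing one factor of a Vandermonde
determinant. -/
theorem det_vandermonde_mul_prod_homQPochhammer {R : Type*} [CommRing R] {ℓ : ℕ} (q : R)
    (X : Fin ℓ → R) (w : Fin ℓ → ℕ) :
    (vandermonde fun k => X k * q ^ w k).det *
        ∏ s, ∏ r, homQPochhammer q (X s * q ^ w s) (X r) (w r) =
      (-1) ^ (∑ k, w k) * q ^ (∑ k, w k).choose 2 * (vandermonde X).det *
        crossQPochhammer q X w := by
  have hsplit (f : Fin ℓ → Fin ℓ → R) :
      ∏ s, ∏ r, f r s = (∏ s, f s s) * ∏ i, ∏ j ∈ Ioi i, f j i * f i j := by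
    rw [prod_prod_Ioi_mul_eq_prod_prod_off_diag, ← prod_mul_distrib]
    exact prod_congr rfl fun s _ => Fintype.prod_eq_mul_prod_compl s fun r => f r s
  have hpairs :
      (vandermonde fun k => X k * q ^ w k).det *
          ∏ i, ∏ j ∈ Ioi i, homQPochhammer q (X i * q ^ w i) (X j) (w j) *
            homQPochhammer q (X j * q ^ w j) (X i) (w i) =
        q ^ (∑ i, ∑ j ∈ Ioi i, w j * w i) * (vandermonde X).det *
          ∏ i, ∏ j ∈ Ioi i, homQPochhammer q (X i) (X j * q) (w j) *
            homQPochhammer q (X j) (X i * q) (w i) := by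
    simp only [det_vandermonde, ← prod_pow_eq_pow_sum, ← prod_mul_distrib,
      homQPochhammer_mul_pow_mul_homQPochhammer_mul_pow]
  rw [crossQPochhammer, prod_comm (f := fun r s => homQPochhammer q (X s) (X r * q) (w r)),
    hsplit fun r s => homQPochhammer q (X s * q ^ w s) (X r) (w r),
    hsplit fun r s => homQPochhammer q (X s) (X r * q) (w r), mul_left_comm, hpairs,
    ← sum_choose_two_add_sum_Ioi, pow_add, ← prod_pow_eq_pow_sum univ w,
    ← prod_pow_eq_pow_sum univ fun k => (w k).choose 2]
  simp only [homQPochhammer_mul_pow_self, prod_mul_distrib]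
  ring

variable {F : Type*} [Field F] {ℓ : ℕ}

lemma prod_nodalWeight_sigma_range (q : F) (X : Fin ℓ → F) (w u : Fin ℓ → ℕ) :
    ∏ s, Lagrange.nodalWeight (univ.sigma fun r => range (w r + 1 + u r))
        (fun z => X z.1 * q ^ z.2) ⟨s, w s⟩ =
      ((∏ s, ∏ r, homQPochhammer q (X s * q ^ w s) (X r) (w r)) *
        ((-1) ^ ℓ.choose 2 * (vandermonde fun k => X k * q ^ w k).det ^ 2) *
        crossQPochhammer q (fun k => X k * q ^ w k) u)⁻¹ := by
  have hnode (s : Fin ℓ) :=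
    prod_erase_sigma_range w u s fun r m => X s * q ^ w s - X r * q ^ m
  simp only [Lagrange.nodalWeight, prod_inv_distrib, hnode, prod_mul_distrib]
  rw [prod_compl_singleton_sub fun k => X k * q ^ w k, crossQPochhammer,
    prod_comm (f := fun r s => homQPochhammer _ _ _ (u r))]
  simp only [homQPochhammer, pow_add, pow_one, mul_assoc]

lemma det_vandermonde_mul_prod_nodalWeight (q : F) (X : Fin ℓ → F) (w u : Fin ℓ → ℕ) :
    (vandermonde fun k => X k * q ^ w k).det *
        ∏ s, Lagrange.nodalWeight (univ.sigma fun r => range (w r + 1 + u r))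
          (fun z => X z.1 * q ^ z.2) ⟨s, w s⟩ =
      ((-1) ^ ℓ.choose 2 * (vandermonde X).det)⁻¹ *
        ((-1) ^ (∑ k, w k) * q ^ (∑ k, w k).choose 2 * crossQPochhammer q X w *
          crossQPochhammer q (fun k => X k * q ^ w k) u)⁻¹ := by
  have hmilne := det_vandermonde_mul_prod_homQPochhammer q X w
  rw [prod_nodalWeight_sigma_range]
  generalize (vandermonde fun k => X k * q ^ w k).det = V at *
  have hV : V * (V ^ 2)⁻¹ = V⁻¹ := by field_simp
  rw [← mul_inv]
  calc
    _ = V * (V ^ 2)⁻¹ * ((-1) ^ ℓ.choose 2 *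
        (∏ s, ∏ r, homQPochhammer q (X s * q ^ w s) (X r) (w r)) *
        crossQPochhammer q (fun k => X k * q ^ w k) u)⁻¹ := by
      simp only [mul_inv]; ring
    _ = _ := by
      rw [hV, ← mul_inv]
      congr 1
      linear_combination (-1) ^ ℓ.choose 2 * crossQPochhammer q (fun k => X k * q ^ w k) u * hmilne

theorem sum_Icc_eval_mul_crossQPochhammer_inv_eq_zero {q : F} {X : Fin ℓ → F}
    (hX : Function.Injective fun z : Σ _ : Fin ℓ, ℕ => X z.1 * q ^ z.2) {n : Fin ℓ → ℕ}
    {P : Polynomial F} (hP : P.natDegree < ∑ k, n k) :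
    ∑ w ∈ Icc 0 n, (∏ k, P.eval (X k * q ^ w k)) *
      ((-1) ^ (∑ k, w k) * q ^ (∑ k, w k).choose 2 * crossQPochhammer q X w *
        crossQPochhammer q (fun k => X k * q ^ w k) (n - w))⁻¹ = 0 := by
  have hV : (vandermonde X).det ≠ 0 := det_vandermonde_ne_zero_iff.mpr fun r s h =>
    congrArg Sigma.fst (@hX ⟨r, 0⟩ ⟨s, 0⟩ (by simpa using h))
  have h := sum_piFinset_eval_mul_det_vandermonde_mul_nodalWeight_eq_zero
    (fun k => range (n k + 1)) hX.injOn (P := P) (by simpa [sum_add_distrib] using hP)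
  rw [← mul_eq_zero_iff_left (inv_ne_zero (mul_ne_zero (pow_ne_zero (ℓ.choose 2) (neg_ne_zero.mpr
    one_ne_zero)) hV)), ← h, mul_sum, Pi.Icc_eq]
  refine sum_congr (by simp [← Nat.range_succ_eq_Icc_zero]) fun w hw => ?_
  have hwn : w ≤ n := fun k => Nat.lt_succ_iff.mp (mem_range.mp (Fintype.mem_piFinset.mp hw k))
  obtain ⟨u, rfl⟩ := exists_add_of_le hwn
  simp only [Pi.add_apply, add_right_comm _ _ 1, add_tsub_cancel_left,
    det_vandermonde_mul_prod_nodalWeight]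
  ring

end CrossQPochhammer

section BaileyMatrices

lemma qp_natCast (a q : ℂ) (n : ℕ) : qp a q n = homQPochhammer q 1 a n := by
  simp [qp, homQPochhammer]

lemma qp_zero (a q : ℂ) : qp a q 0 = 1 := by
  simp [qp]

lemma qp_natCast_add (a q : ℂ) (m n : ℕ) :
    qp a q (m + n : ℕ) = qp a q m * homQPochhammer q 1 (a * q ^ m) n := by
  simp only [qp_natCast, homQPochhammer_add]

lemma pow_mul_qp_div {A : ℂ} (hA : A ≠ 0) (q B : ℂ) (n : ℕ) :
    A ^ n * qp (B / A) q n = homQPochhammer q A B n := by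
  rw [qp_natCast, ← homQPochhammer_mul_mul, one_mul, div_mul_cancel₀ B hA]

lemma one_sub_mul_qp_sub_one {a q : ℂ} (hq : q ≠ 0) (ha : 1 - a ≠ 0) (n : ℕ) :
    (1 - a * q ^ n) * qp (a * q) q (n - 1) = qp (a * q) q n := by
  rcases n with _ | n
  · simp [qp, mul_assoc, hq, ha]
  · rw [Nat.cast_succ, add_sub_cancel_right, ← Nat.cast_succ, qp_natCast, qp_natCast,
      homQPochhammer_succ, pow_succ']
    ring

variable {ℓ : ℕ} {q : ℂ} {x : Fin ℓ → ℂ}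

lemma prod_prod_qp_inv (hq : q ≠ 0) (hx : ∀ k, x k ≠ 0) (j n : Fin ℓ → ℕ) :
    ∏ r, ∏ s, (qp (q * (x r / x s) * q ^ ((j r : ℤ) - (j s : ℤ))) q (n r))⁻¹ =
      (∏ k, x k * q ^ j k) ^ (∑ k, n k) * (crossQPochhammer q (fun k => x k * q ^ j k) n)⁻¹ := by
  have hX (k : Fin ℓ) : x k * q ^ j k ≠ 0 := mul_ne_zero (hx k) (pow_ne_zero _ hq)
  have hpow : (∏ k, x k * q ^ j k) ^ (∑ k, n k) = ∏ r, ∏ s, (x s * q ^ j s) ^ n r := by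
    simp only [← prod_pow_eq_pow_sum, prod_pow]
  rw [crossQPochhammer, hpow]
  simp only [← prod_inv_distrib, ← prod_mul_distrib]
  refine prod_congr rfl fun r _ => prod_congr rfl fun s _ => ?_
  have harg : q * (x r / x s) * q ^ ((j r : ℤ) - (j s : ℤ)) =
      x r * q ^ j r * q / (x s * q ^ j s) := by
    rw [zpow_sub₀ hq, zpow_natCast, zpow_natCast]
    field_simp
  rw [harg, ← pow_mul_qp_div (hX s), mul_inv, mul_inv_cancel_left₀ (pow_ne_zero _ (hX s))]

lemma MA_add (hq : q ≠ 0) (hx : ∀ k, x k ≠ 0) (a xl : ℂ) (j w : Fin ℓ → ℕ) :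
    MA ℓ q a x xl (j + w) j =
      (∏ k, x k * q ^ j k) ^ (∑ k, w k) * (crossQPochhammer q (fun k => x k * q ^ j k) w)⁻¹ *
        ∏ k, (qp (a * q * (x k / xl)) q (j k + w k + ∑ s, j s : ℕ))⁻¹ := by
  simp only [MA, Pi.add_apply, Nat.cast_add, add_sub_cancel_left, prod_prod_qp_inv hq hx,
    Nat.cast_sum]

lemma MAstar_add (hq : q ≠ 0) (hx : ∀ k, x k ≠ 0) (a xl : ℂ) (j u : Fin ℓ → ℕ) :
    MAstar ℓ q a x xl (j + u) j =
      (∏ k, (1 - a * (x k / xl) * q ^ ((j + u) k + ∑ s, (j + u) s))) *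
        (∏ k, qp (a * q * (x k / xl)) q (j k + (∑ s, (j + u) s : ℕ) - 1)) *
        ((∏ k, x k * q ^ j k) ^ (∑ k, u k) *
          (crossQPochhammer q (fun k => x k * q ^ j k) u)⁻¹) *
        (-1) ^ (∑ k, u k) * q ^ (∑ k, u k).choose 2 := by
  have hdiff : ∑ s, ((j + u) s : ℤ) - ∑ s, (j s : ℤ) = (∑ s, u s : ℕ) := by
    simp [sum_add_distrib]
  have hsum : ∑ s, ((j + u) s : ℤ) = (∑ s, (j + u) s : ℕ) := (Nat.cast_sum _ _).symm
  have hchoose (m : ℕ) : (m : ℤ) * (m - 1) / 2 = (m.choose 2 : ℕ) := by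
    rcases m with _ | m
    · simp
    · simp [Nat.choose_two_right]
  have hdenom := prod_prod_qp_inv hq hx j u
  rw [MAstar, hdiff, hchoose, zpow_natCast, zpow_natCast, hsum, ← hdenom]
  simp only [← Nat.cast_add ((j + u) _), zpow_natCast]
  simp only [Pi.add_apply, Nat.cast_add, add_sub_cancel_left]

lemma injective_mul_pow_of_qp_ne_zero (hq : q ≠ 0) (hx : ∀ k, x k ≠ 0)
    (hd : ∀ i j : Fin ℓ → ℕ, (∀ k, j k ≤ i k) → ∀ r s : Fin ℓ,
      qp (q * (x r / x s) * q ^ ((j r : ℤ) - (j s : ℤ))) q ((i r : ℤ) - (j r : ℤ)) ≠ 0) :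
    Function.Injective fun z : Σ _ : Fin ℓ, ℕ => x z.1 * q ^ z.2 := by
  have hne (j : Fin ℓ → ℕ) (r s : Fin ℓ) (m : ℕ) : x s * q ^ j s ≠ x r * q ^ (j r + (m + 1)) := by
    intro h
    refine hd (j + fun _ => m + 1) j (fun k => Nat.le_add_right _ _) r s ?_
    rw [Pi.add_apply, Nat.cast_add, add_sub_cancel_left, qp_natCast, homQPochhammer_succ,
      zpow_sub₀ hq, zpow_natCast, zpow_natCast]
    refine mul_eq_zero_of_right _ (sub_eq_zero.mpr ?_)
    have := hx s
    field_simp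
    rw [h]
    ring
  rintro ⟨r, m⟩ ⟨s, p⟩ h
  dsimp only at h
  obtain rfl : r = s := by
    by_contra hrs
    refine hne (Function.update (fun _ => m) s (p + 1)) r s 0 ?_
    rw [Function.update_self, Function.update_of_ne hrs, pow_succ, zero_add, pow_succ, ← mul_assoc,
      ← mul_assoc, h]
  rcases lt_trichotomy m p with hlt | rfl | hlt
  · obtain ⟨d, rfl⟩ := Nat.exists_eq_add_of_lt hlt
    exact absurd h (hne (fun _ => m) r r d)
  · rfl
  · obtain ⟨d, rfl⟩ := Nat.exists_eq_add_of_lt hlt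
    exact absurd h.symm (hne (fun _ => p) r r d)

lemma MAstar_self_mul_MA_self (hq : q ≠ 0) {a xl : ℂ} (i : Fin ℓ → ℕ)
    (hqp : ∀ k, qp (a * q * (x k / xl)) q (i k + ∑ s, i s : ℕ) ≠ 0)
    (ha : ∀ k, 1 - a * (x k / xl) ≠ 0) :
    MAstar ℓ q a x xl i i * MA ℓ q a x xl i i = 1 := by
  simp only [MAstar, MA, sub_self, qp_zero, inv_one, prod_const_one, one_mul, mul_one, zero_mul,
    zpow_zero, Int.zero_ediv, ← prod_mul_distrib, ← Nat.cast_sum, ← Nat.cast_add, zpow_natCast]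
  refine prod_eq_one fun k _ => ?_
  have hfactor := one_sub_mul_qp_sub_one hq (ha k) (i k + ∑ s, i s)
  rw [mul_right_comm a (x k / xl) q] at hfactor
  rw [hfactor, mul_inv_cancel₀ (hqp k)]

lemma MAstar_add_mul_MA_add (hq : q ≠ 0) (hx : ∀ k, x k ≠ 0) {a xl : ℂ} {j w u : Fin ℓ → ℕ}
    (hqp : ∀ k, qp (a * q * (x k / xl)) q (j k + w k + ∑ s, j s : ℕ) ≠ 0)
    (hwu : 0 < ∑ k, (w + u) k) :
    MAstar ℓ q a x xl (j + (w + u)) (j + w) * MA ℓ q a x xl (j + w) j =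
      (∏ k, (1 - a * (x k / xl) * q ^ ((j + (w + u)) k + ∑ s, (j + (w + u)) s))) *
          (∏ k, x k * q ^ j k) ^ (∑ k, (w + u) k) *
          ((-1) ^ (∑ k, (w + u) k) * q ^ (∑ k, (w + u) k).choose 2) *
        ((∏ k, homQPochhammer q 1 (a * q * (x k / xl) * q ^ (j k + w k + ∑ s, j s))
            (∑ k, (w + u) k - 1)) *
          ((-1) ^ (∑ k, w k) * q ^ (∑ k, w k).choose 2 *
            crossQPochhammer q (fun k => x k * q ^ j k) w *
            crossQPochhammer q (fun k => x k * q ^ j k * q ^ w k) u)⁻¹) := by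
  have hratio : (∏ k, qp (a * q * (x k / xl)) q ((j + w) k + (∑ s, (j + (w + u)) s : ℕ) - 1)) *
      ∏ k, (qp (a * q * (x k / xl)) q (j k + w k + ∑ s, j s : ℕ))⁻¹ =
        ∏ k, homQPochhammer q 1 (a * q * (x k / xl) * q ^ (j k + w k + ∑ s, j s))
          (∑ k, (w + u) k - 1) := by
    rw [← prod_mul_distrib]
    refine prod_congr rfl fun k _ => ?_
    have hindex : ((j + w) k + (∑ s, (j + (w + u)) s : ℕ) - 1 : ℤ) =
        (j k + w k + ∑ s, j s + (∑ k, (w + u) k - 1) : ℕ) := by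
      have : ∑ s, (j + (w + u)) s = ∑ s, j s + ∑ k, (w + u) k := sum_add_distrib
      rw [this, Pi.add_apply]
      omega
    rw [hindex, qp_natCast_add, mul_right_comm, mul_inv_cancel₀ (hqp k), one_mul]
  have hnodes (k : Fin ℓ) : x k * q ^ (j + w) k = x k * q ^ j k * q ^ w k := by
    rw [Pi.add_apply, pow_add, mul_assoc]
  have hsum : ∑ k, (w + u) k = ∑ k, w k + ∑ k, u k := sum_add_distrib
  have hnodes_prod : ∏ k, x k * q ^ j k * q ^ w k = (∏ k, x k * q ^ j k) * q ^ ∑ k, w k := by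
    rw [prod_mul_distrib, prod_pow_eq_pow_sum]
  have hstar := MAstar_add hq hx a xl (j + w) u
  rw [add_assoc j w u] at hstar
  rw [hstar, MA_add hq hx, ← hratio]
  simp only [hnodes, hnodes_prod]
  rw [hsum, choose_two_add]
  field_simp
  ring

lemma sum_Icc_MAstar_mul_MA_eq_zero (hq : q ≠ 0) (hx : ∀ k, x k ≠ 0)
    (hinj : Function.Injective fun z : Σ _ : Fin ℓ, ℕ => x z.1 * q ^ z.2) {a xl : ℂ}
    {j n : Fin ℓ → ℕ} (hn : 0 < ∑ k, n k)
    (hqp : ∀ k (m : ℕ), qp (a * q * (x k / xl)) q m ≠ 0) :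
    ∑ y ∈ Icc j (j + n), MAstar ℓ q a x xl (j + n) y * MA ℓ q a x xl y j = 0 := by
  let b : ℂ := a / xl * q ^ (∑ s, j s + 1)
  have hdeg := (natDegree_homQPochhammer_C_mul_X_le q 1 b (∑ k, n k - 1)).trans_lt
    (Nat.sub_lt hn one_pos)
  have hinj' : Function.Injective fun z : Σ _ : Fin ℓ, ℕ => x z.1 * q ^ j z.1 * q ^ z.2 := by
    rintro ⟨r, m⟩ ⟨s, p⟩ h
    have := @hinj ⟨r, j r + m⟩ ⟨s, j s + p⟩ (by simpa only [pow_add, mul_assoc] using h)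
    grind
  rw [← mul_zero ((∏ k, (1 - a * (x k / xl) * q ^ ((j + n) k + ∑ s, (j + n) s))) *
    (∏ k, x k * q ^ j k) ^ (∑ k, n k) * ((-1) ^ (∑ k, n k) * q ^ (∑ k, n k).choose 2)),
    ← sum_Icc_eval_mul_crossQPochhammer_inv_eq_zero (X := fun k => x k * q ^ j k) hinj' hdeg,
    mul_sum]
  nth_rewrite 1 [← add_zero j]
  rw [← map_add_left_Icc, sum_map]
  refine sum_congr rfl fun w hw => ?_
  obtain ⟨u, rfl⟩ := exists_add_of_le (mem_Icc.mp hw).2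
  rw [addLeftEmbedding_apply, MAstar_add_mul_MA_add hq hx (fun k => hqp k _) hn]
  have hnode (k : Fin ℓ) :
      a * q * (x k / xl) * q ^ (j k + w k + ∑ s, j s) = b * (x k * q ^ j k * q ^ w k) := by
    ring
  simp only [eval_homQPochhammer_C_mul_X, hnode, add_tsub_cancel_left]

end BaileyMatrices

/-- **A_ℓ Bailey Transform, second orthogonality relation.**
For generic parameters, `∑_{j ≤ y ≤ i} M*(i;y) M(y;j) = ∏_k δ(i_k, j_k)`. -/
theorem Al_bailey_transform_second (ℓ : ℕ) (hℓ : 1 ≤ ℓ) (q a : ℂ)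
    (hq : q ≠ 0) (ha : a ≠ 0) (x : Fin ℓ → ℂ) (hx : ∀ k, x k ≠ 0)
    (xl : ℂ) (hxl : xl = x ⟨ℓ - 1, by omega⟩)
    (hd1 : ∀ i j : Fin ℓ → ℕ, (∀ k, j k ≤ i k) → ∀ r s : Fin ℓ,
      qp (q * (x r / x s) * q ^ ((j r : ℤ) - (j s : ℤ))) q ((i r : ℤ) - (j r : ℤ)) ≠ 0)
    (hd2 : ∀ i j : Fin ℓ → ℕ, (∀ k, j k ≤ i k) → ∀ k : Fin ℓ,
      qp (a * q * (x k / xl)) q ((i k : ℤ) + ∑ s, (j s : ℤ)) ≠ 0)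
    (hd3 : ∀ k : Fin ℓ, (1 : ℂ) - a * (x k / xl) ≠ 0) :
    ∀ i j : Fin ℓ → ℕ,
      ∑ y ∈ Finset.Icc j i, MAstar ℓ q a x xl i y * MA ℓ q a x xl y j =
        ∏ k, (if i k = j k then (1 : ℂ) else 0) := by
  have hqp (k : Fin ℓ) (m : ℕ) : qp (a * q * (x k / xl)) q m ≠ 0 := by
    simpa using hd2 (fun _ => m) 0 (fun _ => Nat.zero_le m) k
  intro i j
  rw [Fintype.prod_boole]
  by_cases hji : j ≤ i
  · obtain ⟨n, rfl⟩ := exists_add_of_le hji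
    rcases eq_or_ne n 0 with rfl | hn
    · simpa using MAstar_self_mul_MA_self hq j (fun k => hqp k _) hd3
    · have hpos : 0 < ∑ k, n k := Finset.sum_pos' (fun _ _ => Nat.zero_le _)
        ((Function.ne_iff.mp hn).imp fun k hk => ⟨mem_univ k, Nat.pos_of_ne_zero hk⟩)
      rw [sum_Icc_MAstar_mul_MA_eq_zero hq hx (injective_mul_pow_of_qp_ne_zero hq hx hd1) hpos hqp,
        if_neg fun h => hpos.ne' (Finset.sum_eq_zero fun k _ => Nat.add_eq_left.mp (h k))]
  · rw [Finset.Icc_eq_empty hji, Finset.sum_empty, if_neg fun h => hji fun k => (h k).ge]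
end

section
/- (C_ℓ Bailey Transform, first orthogonality relation.) Let ℓ ≥ 1, let q, x_1, …, x_ℓ be nonzero complex numbers such that every q-shifted factorial occurring in a denominator below is nonzero. For vectors i, j of nonnegative integers of length ℓ define M(i;j) := ∏_{r,s=1}^{ℓ} [ ((q x_r/x_s) q^{j_r−j_s}; q)_{i_r−j_r}^{−1} · (q x_r x_s q^{j_r+j_s}; q)_{i_r−j_r}^{−1} ] and M*(i;j) := ∏_{r,s=1}^{ℓ} [ ((q x_r/x_s) q^{j_r−j_s}; q)_{i_r−j_r}^{−1} · (x_r x_s q^{j_r+i_s}; q)_{i_r−j_r}^{−1} ] · ∏_{1≤r<s≤ℓ} (1 − x_r x_s q^{j_r+j_s})/(1 − x_r x_s q^{i_r+i_s}) · (−1)^{|i|−|j|} q^{binom(|i|−|j|,2)}, where |i| = i_1+⋯+i_ℓ. Then for all vectors i, j of nonnegative integers of length ℓ, the sum over all vectors y with j_k ≤ y_k ≤ i_k for k = 1, …, ℓ of M(i;y)·M*(y;j) equals ∏_{k=1}^{ℓ} δ(i_k, j_k), where δ(r,s) = 1 if r = s and 0 otherwise (in particular the sum is empty and equals 0 unless j_k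 ≤ i_k for all k). -/
set_option autoImplicit false
set_option maxHeartbeats 1000000

open Finset

/-- The `C_ℓ` Bailey transform matrix `M(i;j)`. -/
noncomputable def MC (ℓ : ℕ) (q : ℂ) (x : Fin ℓ → ℂ) (i j : Fin ℓ → ℕ) : ℂ :=
  ∏ r, ∏ s,
    ((qp (q * (x r / x s) * q ^ ((j r : ℤ) - (j s : ℤ))) q ((i r : ℤ) - (j r : ℤ)))⁻¹ *
     (qp (q * (x r * x s) * q ^ ((j r : ℤ) + (j s : ℤ))) q ((i r : ℤ) - (j r : ℤ)))⁻¹)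

/-- The `C_ℓ` Bailey transform matrix `M*(i;j)`. -/
noncomputable def MCstar (ℓ : ℕ) (q : ℂ) (x : Fin ℓ → ℂ) (i j : Fin ℓ → ℕ) : ℂ :=
  (∏ r, ∏ s,
    ((qp (q * (x r / x s) * q ^ ((j r : ℤ) - (j s : ℤ))) q ((i r : ℤ) - (j r : ℤ)))⁻¹ *
     (qp ((x r * x s) * q ^ ((j r : ℤ) + (i s : ℤ))) q ((i r : ℤ) - (j r : ℤ)))⁻¹)) *
  (∏ r, ∏ s, if r < s then
      (1 - x r * x s * q ^ ((j r : ℤ) + (j s : ℤ))) /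
        (1 - x r * x s * q ^ ((i r : ℤ) + (i s : ℤ)))
    else 1) *
  (-1 : ℂ) ^ ((∑ s, (i s : ℤ)) - ∑ s, (j s : ℤ)) *
  q ^ (((∑ s, (i s : ℤ)) - ∑ s, (j s : ℤ)) *
        ((∑ s, (i s : ℤ)) - (∑ s, (j s : ℤ)) - 1) / 2)

/-!
Put `u a = a + a⁻¹`. Since `(1 - a / b) * (1 - a * b) = -a * (u b - u a)`, the matrix entries are
products of differences of the nodes `u (x r * q ^ t)`, up to monomials which combine with the sign
and the power of `q` in `M*` to a constant independent of the summation index `y`. What remains is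
the sum over `y` of `∏ s, w (s, y s)` times the Vandermonde determinant of the nodes `(s, y s)`,
where `w` denotes the barycentric weights for the set of all nodes `(s, t)` with `j s ≤ t ≤ i s`.
By multilinearity this sum is a single determinant, whose rows add up to the divided differences of
`1, X, …, X ^ (ℓ - 1)` at all these nodes. If `j ≤ i` and `j ≠ i` there are more than `ℓ` nodes, so
the rows are linearly dependent.
-/

section Determinant

variable {ℓ : ℕ} {α : Type*}

lemma sum_piFinset_prod_mul_det_vandermonde {R : Type*} [CommRing R] (S : Fin ℓ → Finset α)
    (w v : Fin ℓ → α → R) :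
    ∑ y ∈ Fintype.piFinset S, (∏ s, w s (y s)) * (Matrix.vandermonde fun s => v s (y s)).det =
      (Matrix.of fun s k : Fin ℓ => ∑ t ∈ S s, w s t * v s t ^ (k : ℕ)).det := by
  have expand := (Matrix.detRowAlternating (n := Fin ℓ) (R := R)).toMultilinearMap.map_sum_finset
    (fun s t (k : Fin ℓ) => w s t * v s t ^ (k : ℕ)) S
  have rows : (Matrix.of fun s k : Fin ℓ => ∑ t ∈ S s, w s t * v s t ^ (k : ℕ)) =
      fun s => ∑ t ∈ S s, fun k : Fin ℓ => w s t * v s t ^ (k : ℕ) := by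
    ext s k
    simp only [Matrix.of_apply, Finset.sum_apply]
  rw [rows]
  refine (expand.trans (Finset.sum_congr rfl fun y _ => ?_)).symm
  exact Matrix.det_mul_column (fun s => w s (y s)) (Matrix.vandermonde fun s => v s (y s))

variable {K : Type*} [Field K]

lemma sum_nodalWeight_mul_pow_eq_zero {ι : Type*} [DecidableEq ι] {A : Finset ι} {v : ι → K}
    (hv : Set.InjOn v A) {k : ℕ} (hk : k + 1 < #A) :
    ∑ p ∈ A, Lagrange.nodalWeight A v p * v p ^ k = 0 := by
  have hdeg : (Polynomial.X ^ k : Polynomial K).degree < #A := by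
    rw [Polynomial.degree_X_pow]
    exact_mod_cast (Nat.lt_succ_self k).trans hk
  have hcoeff := Lagrange.coeff_eq_sum hv hdeg
  rw [Polynomial.coeff_X_pow, if_neg (by omega)] at hcoeff
  rw [hcoeff]
  refine Finset.sum_congr rfl fun p _ => ?_
  rw [Lagrange.nodalWeight, Finset.prod_inv_distrib, Polynomial.eval_pow, Polynomial.eval_X,
    mul_comm, div_eq_mul_inv]

variable [DecidableEq α]

lemma sum_piFinset_nodalWeight_mul_det_vandermonde_eq_zero (S : Fin ℓ → Finset α)
    {v : (_ : Fin ℓ) × α → K} (hv : Set.InjOn v (univ.sigma S)) (hS : ℓ < ∑ s, #(S s)) :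
    ∑ y ∈ Fintype.piFinset S, (∏ s, Lagrange.nodalWeight (univ.sigma S) v ⟨s, y s⟩) *
      (Matrix.vandermonde fun s => v ⟨s, y s⟩).det = 0 := by
  rw [sum_piFinset_prod_mul_det_vandermonde S
    (fun s t => Lagrange.nodalWeight (univ.sigma S) v ⟨s, t⟩) fun s t => v ⟨s, t⟩]
  refine Matrix.exists_vecMul_eq_zero_iff.1 ⟨1, ?_, ?_⟩
  · obtain ⟨s, -, -⟩ := Finset.exists_ne_zero_of_sum_ne_zero (Nat.ne_zero_of_lt hS)
    exact fun h => one_ne_zero (congrFun h s)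
  · ext k
    simp only [Matrix.vecMul, dotProduct, Pi.one_apply, one_mul, Matrix.of_apply, Pi.zero_apply]
    rw [← Finset.sum_sigma univ S fun p => Lagrange.nodalWeight (univ.sigma S) v p * v p ^ (k : ℕ)]
    refine sum_nodalWeight_mul_pow_eq_zero hv ?_
    rw [Finset.card_sigma]
    omega

lemma nodalWeight_sigma {ι : Type*} [Fintype ι] [DecidableEq ι] (S : ι → Finset α)
    (v : (_ : ι) × α → K) {y : ι → α} (hy : y ∈ Fintype.piFinset S) (s : ι) :
    Lagrange.nodalWeight (univ.sigma S) v ⟨s, y s⟩ =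
      (∏ r, ∏ t ∈ (S r).erase (y r), (v ⟨s, y s⟩ - v ⟨r, t⟩)⁻¹) *
        ∏ r ∈ {s}ᶜ, (v ⟨s, y s⟩ - v ⟨r, y r⟩)⁻¹ := by
  have hmem (r : ι) : y r ∈ S r := Fintype.mem_piFinset.1 hy r
  have herase : (univ.sigma S).erase ⟨s, y s⟩ =
      univ.sigma fun r => if r = s then (S r).erase (y r) else S r := by
    ext ⟨r, t⟩
    by_cases hr : r = s
    · subst hr; simp
    · simp [hr]
  rw [Lagrange.nodalWeight, herase, Finset.prod_sigma,
    ← Finset.mul_prod_erase univ _ (Finset.mem_univ s), ← Finset.compl_singleton, if_pos rfl,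
    ← Finset.mul_prod_erase univ (fun r => ∏ t ∈ (S r).erase (y r), _) (Finset.mem_univ s),
    ← Finset.compl_singleton, mul_assoc, ← Finset.prod_mul_distrib]
  congr 1
  refine Finset.prod_congr rfl fun r hr => ?_
  rw [if_neg (by simpa using hr), Finset.prod_erase_mul _ _ (hmem r)]

theorem sum_piFinset_inv_prod_sub_eq_zero (S : Fin ℓ → Finset α) {v : (_ : Fin ℓ) × α → K}
    (hv : Set.InjOn v (univ.sigma S)) (hS : ℓ < ∑ s, #(S s)) :
    ∑ y ∈ Fintype.piFinset S,
      (∏ r, ∏ s, ∏ t ∈ (S r).erase (y r), (v ⟨s, y s⟩ - v ⟨r, t⟩)⁻¹) *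
        ∏ r, ∏ s > r, (v ⟨s, y s⟩ - v ⟨r, y r⟩)⁻¹ = 0 := by
  rw [← mul_zero (∏ r : Fin ℓ, ∏ _s > r, (-1 : K)),
    ← sum_piFinset_nodalWeight_mul_det_vandermonde_eq_zero S hv hS, Finset.mul_sum]
  refine Finset.sum_congr rfl fun y hy => ?_
  have hpair (r s : Fin ℓ) (hrs : r < s) : v ⟨s, y s⟩ - v ⟨r, y r⟩ ≠ 0 := by
    have hmem (k : Fin ℓ) : (⟨k, y k⟩ : (_ : Fin ℓ) × α) ∈ univ.sigma S :=
      Finset.mem_sigma.2 ⟨Finset.mem_univ k, Fintype.mem_piFinset.1 hy k⟩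
    exact sub_ne_zero.2 fun h => hrs.ne' (congrArg Sigma.fst (hv (hmem s) (hmem r) h))
  simp only [nodalWeight_sigma S v hy, Finset.prod_mul_distrib, Matrix.det_vandermonde]
  rw [← Finset.prod_prod_Ioi_mul_eq_prod_prod_off_diag fun r s =>
      (v ⟨s, y s⟩ - v ⟨r, y r⟩)⁻¹, Finset.prod_comm, mul_left_comm, mul_assoc]
  congr 1
  simp only [← Finset.prod_mul_distrib]
  refine Finset.prod_congr rfl fun r _ => Finset.prod_congr rfl fun s hs => ?_
  have h := hpair r s (Finset.mem_Ioi.1 hs)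
  rw [← neg_sub (v ⟨s, y s⟩) (v ⟨r, y r⟩), inv_neg]
  field_simp

end Determinant

section Products

variable {ι : Type*} [LinearOrder ι] {M : Type*} [CommMonoid M]

lemma prod_Ico_mul_prod_Ioc [LocallyFiniteOrder ι] (f : ι → M) {a b c : ι} (hab : a ≤ b)
    (hbc : b ≤ c) :
    (∏ t ∈ Ico a b, f t) * ∏ t ∈ Ioc b c, f t = ∏ t ∈ (Icc a c).erase b, f t := by
  have hdisj : Disjoint (Ico a b) (Ioc b c) := Finset.disjoint_left.2 fun t ht ht' =>
    (Finset.mem_Ico.1 ht).2.asymm (Finset.mem_Ioc.1 ht').1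
  rw [← Finset.prod_union hdisj]
  refine Finset.prod_congr (Finset.ext fun t => ?_) fun _ _ => rfl
  simp only [Finset.mem_union, Finset.mem_Ico, Finset.mem_Ioc, Finset.mem_erase, Finset.mem_Icc]
  grind

lemma prod_Ioc_eq_prod_range (f : ℕ → M) (m n : ℕ) :
    ∏ t ∈ Ioc m n, f t = ∏ t ∈ range (n - m), f (m + t + 1) := by
  rw [← Finset.Ico_add_one_add_one_eq_Ioc, Finset.prod_Ico_eq_prod_range, Nat.add_sub_add_right]
  simp only [Nat.add_right_comm]

variable [Fintype ι] [LocallyFiniteOrderTop ι] [LocallyFiniteOrderBot ι]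

@[to_additive]
lemma prod_prod_eq_prod_diag_mul (f : ι → ι → M) :
    ∏ r, ∏ s, f r s = (∏ r, f r r) * ∏ r, ∏ s > r, f r s * f s r := by
  rw [Finset.prod_prod_Ioi_mul_eq_prod_prod_off_diag fun s r => f r s, ← Finset.prod_mul_distrib]
  refine Finset.prod_congr rfl fun r _ => ?_
  rw [← Finset.prod_singleton (fun s => f r s) r, Finset.prod_mul_prod_compl]

lemma mul_self_eq_two_mul_choose_two_add (n : ℕ) : n * n = 2 * n.choose 2 + n := by
  rw [Nat.choose_two_right, Nat.mul_div_cancel' (Nat.even_mul_pred_self n).two_dvd]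
  cases n <;> simp [Nat.mul_succ]

lemma choose_two_sum (m : ι → ℕ) :
    (∑ r, m r).choose 2 = ∑ r, (m r).choose 2 + ∑ r, ∑ s > r, m r * m s := by
  have hsq : (∑ r, m r) * ∑ r, m r = ∑ r, m r * m r + 2 * ∑ r, ∑ s > r, m r * m s := by
    rw [Finset.sum_mul_sum, sum_sum_eq_sum_diag_add fun r s => m r * m s]
    have hcomm (r s : ι) : m r * m s + m s * m r = 2 * (m r * m s) := by ring
    simp only [hcomm, Finset.mul_sum]
  have hdiag : ∑ r, m r * m r = 2 * ∑ r, (m r).choose 2 + ∑ r, m r := by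
    simp only [mul_self_eq_two_mul_choose_two_add, Finset.sum_add_distrib, Finset.mul_sum]
  rw [mul_self_eq_two_mul_choose_two_add] at hsq
  omega

end Products

section QProducts

variable {R : Type*} [CommRing R]

lemma prod_range_mul_pow_succ_sub (q a b : R) (m n : ℕ) :
    ∏ t ∈ range m, (b * q ^ (n + 1) - a * q ^ (t + 1)) =
      q ^ m * ∏ t ∈ range m, (b * q ^ n - a * q ^ t) := by
  have hfactor (t : ℕ) : b * q ^ (n + 1) - a * q ^ (t + 1) = q * (b * q ^ n - a * q ^ t) := by ring
  simp only [hfactor, Finset.prod_mul_distrib, Finset.prod_const, Finset.card_range]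

lemma prod_range_sub_mul_pow_succ_self (q a : R) (m : ℕ) :
    q ^ m.choose 2 * ∏ t ∈ range m, (a - a * q ^ (t + 1)) =
      (-1) ^ m * ∏ t ∈ range m, (a * q ^ m - a * q ^ t) := by
  induction m with
  | zero => simp
  | succ m ih =>
    rw [Finset.prod_range_succ, Finset.prod_range_succ', prod_range_mul_pow_succ_sub,
      Nat.choose_succ_succ' m 1, Nat.choose_one_right, pow_add, pow_zero, pow_succ (-1 : R)]
    linear_combination q ^ m * (a - a * q ^ (m + 1)) * ih

-- Up to a power of `q`, both sides are `(-1) ^ n` times the product of the `b - a * q ^ l` over all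
-- integers `l` with `-n ≤ l ≤ m`.
lemma prod_range_sub_mul_pow_succ_pair (q a b : R) (m n : ℕ) :
    q ^ (m * n) * ((∏ t ∈ range m, (b - a * q ^ (t + 1))) *
      (∏ t ∈ range n, (a - b * q ^ (t + 1))) * (b - a)) =
    (∏ t ∈ range m, (b * q ^ n - a * q ^ t)) * (∏ t ∈ range n, (a * q ^ m - b * q ^ t)) *
      (b * q ^ n - a * q ^ m) := by
  induction n with
  | zero =>
    have htele := Finset.prod_range_succ (fun t => b - a * q ^ t) m
    rw [Finset.prod_range_succ'] at htele
    simpa using htele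
  | succ n ih =>
    have htele := Finset.prod_range_succ (fun t => b * q ^ (n + 1) - a * q ^ t) m
    rw [Finset.prod_range_succ', prod_range_mul_pow_succ_sub] at htele
    rw [Finset.prod_range_succ, Finset.prod_range_succ, Nat.mul_succ, pow_add]
    linear_combination q ^ m * (a - b * q ^ (n + 1)) * ih +
      (∏ t ∈ range n, (a * q ^ m - b * q ^ t)) * (a * q ^ m - b * q ^ n) * htele

end QProducts

section Joukowski

variable {K : Type*} [Field K]

/-- The Joukowski map `a ↦ a + a⁻¹`. The substitution `a = x r * q ^ t` turns the two families of
factors of the `C_ℓ` matrices into differences of its values. -/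
def joukowski (a : K) : K := a + a⁻¹

lemma one_sub_div_mul_one_sub_mul {a b : K} (ha : a ≠ 0) (hb : b ≠ 0) :
    (1 - a / b) * (1 - a * b) = -a * (joukowski b - joukowski a) := by
  unfold joukowski
  field_simp
  ring

lemma joukowski_sub_joukowski {a b : K} (ha : a ≠ 0) (hb : b ≠ 0) :
    joukowski b - joukowski a = (b - a) * (1 - a * b) * -(a * b)⁻¹ := by
  unfold joukowski
  field_simp
  ring

lemma joukowski_eq_joukowski_iff {a b : K} (ha : a ≠ 0) (hb : b ≠ 0) :
    joukowski a = joukowski b ↔ a = b ∨ a * b = 1 := by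
  rw [eq_comm, ← sub_eq_zero, joukowski_sub_joukowski ha hb, mul_eq_zero, mul_eq_zero,
    neg_eq_zero, inv_eq_zero, or_iff_left (mul_ne_zero ha hb), sub_eq_zero, sub_eq_zero,
    eq_comm (a := b), eq_comm (a := (1 : K))]

/-- The factor of the denominator of `M*(y; j)` at `(r, s)`, where `a = x r * q ^ j r`,
`b = x s * q ^ j s`, `m = y r - j r` and `n = y s - j s`. -/
def starDenom (q a b : K) (m n : ℕ) : K :=
  ∏ t ∈ range m, (1 - a * q ^ (t + 1) / b) * (1 - a * q ^ t * (b * q ^ n))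

/-- The counterpart of `starDenom` in which the two families of factors are evaluated at the same
pairs of points, so that they combine into differences of values of `joukowski`. -/
def nodeDenom (q a b : K) (m n : ℕ) : K :=
  ∏ t ∈ range m, -(a * q ^ (t + 1)) * (joukowski (b * q ^ n) - joukowski (a * q ^ t))

variable {q a b : K}

lemma pow_mul_starDenom (hb : b ≠ 0) (m n : ℕ) :
    b ^ m * starDenom q a b m n =
      (∏ t ∈ range m, (b - a * q ^ (t + 1))) *
        ∏ t ∈ range m, (1 - a * q ^ t * (b * q ^ n)) := by
  have hpow : b ^ m = ∏ _t ∈ range m, b := by rw [Finset.prod_const, Finset.card_range]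
  rw [hpow, starDenom, ← Finset.prod_mul_distrib, ← Finset.prod_mul_distrib]
  refine Finset.prod_congr rfl fun t _ => ?_
  field_simp

lemma pow_mul_nodeDenom (hq : q ≠ 0) (ha : a ≠ 0) (hb : b ≠ 0) (m n : ℕ) :
    (b * q ^ n) ^ m * nodeDenom q a b m n =
      q ^ m * ((∏ t ∈ range m, (b * q ^ n - a * q ^ t)) *
        ∏ t ∈ range m, (1 - a * q ^ t * (b * q ^ n))) := by
  have hpow (c : K) : c ^ m = ∏ _t ∈ range m, c := by rw [Finset.prod_const, Finset.card_range]
  rw [hpow, hpow q, nodeDenom, ← Finset.prod_mul_distrib, ← Finset.prod_mul_distrib,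
    ← Finset.prod_mul_distrib]
  refine Finset.prod_congr rfl fun t _ => ?_
  rw [joukowski_sub_joukowski (mul_ne_zero ha (pow_ne_zero t hq))
    (mul_ne_zero hb (pow_ne_zero n hq))]
  field_simp
  ring

lemma starDenom_self (hq : q ≠ 0) (ha : a ≠ 0) (m : ℕ) :
    starDenom q a a m m = (-1) ^ m * q ^ m.choose 2 * nodeDenom q a a m m := by
  have hstar := pow_mul_starDenom (q := q) (a := a) ha m m
  have hnode := pow_mul_nodeDenom hq ha ha m m
  have hprod := prod_range_sub_mul_pow_succ_self q a m
  have hpow : q ^ (m * m) = q ^ m.choose 2 * q ^ m.choose 2 * q ^ m := by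
    rw [mul_self_eq_two_mul_choose_two_add, two_mul, pow_add, pow_add]
  rw [mul_pow, ← pow_mul, hpow] at hnode
  refine mul_left_cancel₀ (a := a ^ m * q ^ m.choose 2 * q ^ m) (by simp [ha, hq]) ?_
  linear_combination q ^ m * q ^ m.choose 2 * hstar +
    q ^ m * (∏ t ∈ range m, (1 - a * q ^ t * (a * q ^ m))) * hprod - (-1) ^ m * hnode

lemma starDenom_mul_starDenom (hq : q ≠ 0) (ha : a ≠ 0) (hb : b ≠ 0) (m n : ℕ) :
    starDenom q a b m n * starDenom q b a n m *
        ((1 - a * q ^ m * (b * q ^ n)) * (joukowski b - joukowski a)) =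
      q ^ (m * n) * (nodeDenom q a b m n * nodeDenom q b a n m) *
        ((1 - a * b) * (joukowski (b * q ^ n) - joukowski (a * q ^ m))) := by
  have hstar := pow_mul_starDenom (q := q) (a := a) hb m n
  have hstar' := pow_mul_starDenom (q := q) (a := b) ha n m
  have hnode := pow_mul_nodeDenom hq ha hb m n
  have hnode' := pow_mul_nodeDenom hq hb ha n m
  have hprod := prod_range_sub_mul_pow_succ_pair q a b m n
  rw [mul_pow, ← pow_mul, mul_comm n m] at hnode
  rw [mul_pow, ← pow_mul] at hnode'
  rw [joukowski_sub_joukowski ha hb,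
    joukowski_sub_joukowski (mul_ne_zero ha (pow_ne_zero m hq)) (mul_ne_zero hb (pow_ne_zero n hq))]
  have hinv : q ^ m * q ^ n * (a * q ^ m * (b * q ^ n))⁻¹ = (a * b)⁻¹ := by field_simp
  set B := ∏ t ∈ range m, (1 - a * q ^ t * (b * q ^ n))
  set B' := ∏ t ∈ range n, (1 - b * q ^ t * (a * q ^ m))
  set P := ∏ t ∈ range m, (b - a * q ^ (t + 1))
  set P' := ∏ t ∈ range n, (a - b * q ^ (t + 1))
  set N := ∏ t ∈ range m, (b * q ^ n - a * q ^ t)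
  set N' := ∏ t ∈ range n, (a * q ^ m - b * q ^ t)
  refine mul_left_cancel₀ (a := b ^ m * a ^ n * q ^ (m * n)) (by simp [ha, hb, hq]) ?_
  calc b ^ m * a ^ n * q ^ (m * n) * (starDenom q a b m n * starDenom q b a n m *
        ((1 - a * q ^ m * (b * q ^ n)) * ((b - a) * (1 - a * b) * -(a * b)⁻¹)))
    _ = (b ^ m * starDenom q a b m n) * (a ^ n * starDenom q b a n m) * q ^ (m * n) * (b - a) *
          ((1 - a * q ^ m * (b * q ^ n)) * (1 - a * b) * -(a * b)⁻¹) := by ring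
    _ = (q ^ (m * n) * (P * P' * (b - a))) * (B * B') *
          ((1 - a * q ^ m * (b * q ^ n)) * (1 - a * b) * -(a * b)⁻¹) := by
        rw [hstar, hstar']; ring
    _ = (q ^ m * (N * B)) * (q ^ n * (N' * B')) * (b * q ^ n - a * q ^ m) *
          ((1 - a * q ^ m * (b * q ^ n)) * (1 - a * b) * -(a * q ^ m * (b * q ^ n))⁻¹) := by
        rw [hprod, ← hinv]; ring
    _ = _ := by rw [← hnode, ← hnode']; ring

lemma prod_starDenom_mul {ι : Type*} [LinearOrder ι] [Fintype ι] [LocallyFiniteOrderTop ι]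
    [LocallyFiniteOrderBot ι] (hq : q ≠ 0) {a : ι → K} (ha : ∀ r, a r ≠ 0) (m : ι → ℕ) :
    (∏ r, ∏ s, starDenom q (a r) (a s) (m r) (m s)) *
        ∏ r, ∏ s > r,
          (1 - a r * q ^ m r * (a s * q ^ m s)) * (joukowski (a s) - joukowski (a r)) =
      (-1) ^ (∑ r, m r) * q ^ (∑ r, m r).choose 2 *
        (∏ r, ∏ s, nodeDenom q (a r) (a s) (m r) (m s)) *
        ∏ r, ∏ s > r,
          (1 - a r * a s) * (joukowski (a s * q ^ m s) - joukowski (a r * q ^ m r)) := by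
  have hpairs :
      (∏ r, ∏ s > r, starDenom q (a r) (a s) (m r) (m s) * starDenom q (a s) (a r) (m s) (m r)) *
          ∏ r, ∏ s > r,
            (1 - a r * q ^ m r * (a s * q ^ m s)) * (joukowski (a s) - joukowski (a r)) =
        q ^ (∑ r, ∑ s > r, m r * m s) *
          (∏ r, ∏ s > r,
            nodeDenom q (a r) (a s) (m r) (m s) * nodeDenom q (a s) (a r) (m s) (m r)) *
          ∏ r, ∏ s > r,
            (1 - a r * a s) * (joukowski (a s * q ^ m s) - joukowski (a r * q ^ m r)) := by
    simp only [← Finset.prod_pow_eq_pow_sum, ← Finset.prod_mul_distrib (s := Ioi _),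
      ← Finset.prod_mul_distrib (s := univ), starDenom_mul_starDenom hq (ha _) (ha _)]
  have hdiag : ∏ r, starDenom q (a r) (a r) (m r) (m r) =
      (-1) ^ (∑ r, m r) * q ^ (∑ r, (m r).choose 2) *
        ∏ r, nodeDenom q (a r) (a r) (m r) (m r) := by
    simp only [starDenom_self hq (ha _), Finset.prod_mul_distrib, Finset.prod_pow_eq_pow_sum]
  rw [prod_prod_eq_prod_diag_mul fun r s => starDenom q (a r) (a s) (m r) (m s),
    prod_prod_eq_prod_diag_mul fun r s => nodeDenom q (a r) (a s) (m r) (m s), mul_assoc, hpairs,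
    hdiag, choose_two_sum, pow_add]
  ring

end Joukowski

section Matrices

lemma qp_natCast_sub (a q : ℂ) {m n : ℕ} (hnm : n ≤ m) :
    qp a q ((m : ℤ) - n) = ∏ k ∈ range (m - n), (1 - a * q ^ k) := by
  rw [← Nat.cast_sub hnm, qp, if_pos (Nat.cast_nonneg _), Int.toNat_natCast]
  simp only [zpow_natCast]

variable {ℓ : ℕ} {q : ℂ} {x : Fin ℓ → ℂ}

/-- The interpolation node indexed by `(k, t)`: the summation index `y` selects the nodes
`(k, y k)`. -/
noncomputable def joukowskiNode (q : ℂ) (x : Fin ℓ → ℂ) (p : (_ : Fin ℓ) × ℕ) : ℂ :=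
  joukowski (x p.1 * q ^ p.2)

lemma qp_mul_div_mul_zpow_sub (hq : q ≠ 0) (a b : ℂ) {m n : ℕ} (hnm : n ≤ m) (k : ℕ) :
    qp (q * (a / b) * q ^ ((n : ℤ) - k)) q ((m : ℤ) - n) =
      ∏ t ∈ range (m - n), (1 - a * q ^ n * q ^ (t + 1) / (b * q ^ k)) := by
  rw [qp_natCast_sub _ _ hnm]
  refine Finset.prod_congr rfl fun t _ => ?_
  rw [zpow_sub₀ hq, zpow_natCast, zpow_natCast]
  ring

lemma qp_mul_zpow_add (q a : ℂ) {m n : ℕ} (hnm : n ≤ m) (k : ℕ) :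
    qp (a * q ^ ((n : ℤ) + k)) q ((m : ℤ) - n) =
      ∏ t ∈ range (m - n), (1 - a * q ^ (n + k + t)) := by
  rw [qp_natCast_sub _ _ hnm]
  refine Finset.prod_congr rfl fun t _ => ?_
  rw [← Nat.cast_add, zpow_natCast, mul_assoc, ← pow_add]

lemma MC_eq_prod_node_sub (hq : q ≠ 0) (hx : ∀ k, x k ≠ 0) {i y : Fin ℓ → ℕ} (hyi : y ≤ i) :
    MC ℓ q x i y = ∏ r, ∏ s, (∏ t ∈ Ioc (y r) (i r), (-(x r * q ^ t))⁻¹) *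
      ∏ t ∈ Ioc (y r) (i r), (joukowskiNode q x ⟨s, y s⟩ - joukowskiNode q x ⟨r, t⟩)⁻¹ := by
  refine Finset.prod_congr rfl fun r _ => Finset.prod_congr rfl fun s _ => ?_
  rw [qp_mul_div_mul_zpow_sub hq _ _ (hyi r), qp_mul_zpow_add _ _ (hyi r), ← mul_inv,
    ← Finset.prod_mul_distrib, ← Finset.prod_inv_distrib, ← Finset.prod_mul_distrib,
    prod_Ioc_eq_prod_range]
  refine Finset.prod_congr rfl fun t _ => ?_
  rw [← mul_inv]
  congr 1
  have hsub := one_sub_div_mul_one_sub_mul (mul_ne_zero (hx r) (pow_ne_zero (y r + t + 1) hq))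
    (mul_ne_zero (hx s) (pow_ne_zero (y s) hq))
  rw [joukowskiNode, joukowskiNode, ← hsub]
  ring

lemma nodeDenom_eq_prod_node_sub {r s : Fin ℓ} {j y : Fin ℓ → ℕ} (hjy : j ≤ y) :
    nodeDenom q (x r * q ^ j r) (x s * q ^ j s) (y r - j r) (y s - j s) =
      (∏ t ∈ Ioc (j r) (y r), -(x r * q ^ t)) *
        ∏ t ∈ Ico (j r) (y r), (joukowskiNode q x ⟨s, y s⟩ - joukowskiNode q x ⟨r, t⟩) := by
  rw [prod_Ioc_eq_prod_range, Finset.prod_Ico_eq_prod_range, ← Finset.prod_mul_distrib]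
  refine Finset.prod_congr rfl fun t _ => ?_
  simp only [joukowskiNode, mul_assoc, ← pow_add, Nat.add_sub_cancel' (hjy s), Nat.add_assoc]

lemma starDenom_eq_qp_mul_qp (hq : q ≠ 0) {r s : Fin ℓ} {j y : Fin ℓ → ℕ} (hjy : j ≤ y) :
    starDenom q (x r * q ^ j r) (x s * q ^ j s) (y r - j r) (y s - j s) =
      qp (q * (x r / x s) * q ^ ((j r : ℤ) - j s)) q ((y r : ℤ) - j r) *
        qp (x r * x s * q ^ ((j r : ℤ) + y s)) q ((y r : ℤ) - j r) := by
  rw [qp_mul_div_mul_zpow_sub hq _ _ (hjy r), qp_mul_zpow_add _ _ (hjy r),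
    ← Finset.prod_mul_distrib, starDenom]
  refine Finset.prod_congr rfl fun t _ => ?_
  rw [mul_assoc (x s), ← pow_add, Nat.add_sub_cancel' (hjy s)]
  ring

lemma neg_one_zpow_mul_zpow_sub_sum (q : ℂ) {j y : Fin ℓ → ℕ} (hjy : j ≤ y) :
    (-1 : ℂ) ^ ((∑ s, (y s : ℤ)) - ∑ s, (j s : ℤ)) *
        q ^ (((∑ s, (y s : ℤ)) - ∑ s, (j s : ℤ)) *
          ((∑ s, (y s : ℤ)) - (∑ s, (j s : ℤ)) - 1) / 2) =
      (-1) ^ (∑ s, (y s - j s)) * q ^ (∑ s, (y s - j s)).choose 2 := by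
  have hsum : (∑ s, (y s : ℤ)) - ∑ s, (j s : ℤ) = (∑ s, (y s - j s) : ℕ) := by
    rw [Nat.cast_sum, ← Finset.sum_sub_distrib]
    exact Finset.sum_congr rfl fun s _ => (Nat.cast_sub (hjy s)).symm
  have hchoose (n : ℕ) : (n : ℤ) * (n - 1) / 2 = n.choose 2 := by
    have h : (n : ℤ) * n = 2 * n.choose 2 + n := by
      exact_mod_cast mul_self_eq_two_mul_choose_two_add n
    rw [show (n : ℤ) * (n - 1) = 2 * n.choose 2 by linarith, Int.mul_ediv_cancel_left _ two_ne_zero]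
  rw [hsum, hchoose, zpow_natCast, zpow_natCast]

lemma prod_Ioi_node_sub_ne_zero (hnode : Function.Injective (joukowskiNode q x))
    (m : Fin ℓ → ℕ) :
    ∏ r, ∏ s > r, (joukowskiNode q x ⟨s, m s⟩ - joukowskiNode q x ⟨r, m r⟩) ≠ 0 :=
  Finset.prod_ne_zero_iff.2 fun _ _ => Finset.prod_ne_zero_iff.2 fun _ hs =>
    sub_ne_zero.2 fun h => (Finset.mem_Ioi.1 hs).ne' (congrArg Sigma.fst (hnode h))

lemma prod_Ioi_one_sub_mul_ne_zero (hq : q ≠ 0) (hx : ∀ k, x k ≠ 0)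
    (hnode : Function.Injective (joukowskiNode q x)) (m : Fin ℓ → ℕ) :
    ∏ r, ∏ s > r, (1 - x r * q ^ m r * (x s * q ^ m s)) ≠ 0 :=
  Finset.prod_ne_zero_iff.2 fun r _ => Finset.prod_ne_zero_iff.2 fun s hs =>
    sub_ne_zero.2 fun h => (Finset.mem_Ioi.1 hs).ne <| congrArg Sigma.fst <|
      hnode (a₁ := ⟨r, m r⟩) (a₂ := ⟨s, m s⟩) <|
        (joukowski_eq_joukowski_iff (mul_ne_zero (hx r) (pow_ne_zero (m r) hq))
          (mul_ne_zero (hx s) (pow_ne_zero (m s) hq))).2 (.inr h.symm)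

lemma MCstar_eq_prod_node_sub (hq : q ≠ 0) (hx : ∀ k, x k ≠ 0)
    (hnode : Function.Injective (joukowskiNode q x)) {y j : Fin ℓ → ℕ} (hjy : j ≤ y) :
    MCstar ℓ q x y j =
      (∏ r, ∏ s, (∏ t ∈ Ioc (j r) (y r), (-(x r * q ^ t))⁻¹) *
        ∏ t ∈ Ico (j r) (y r), (joukowskiNode q x ⟨s, y s⟩ - joukowskiNode q x ⟨r, t⟩)⁻¹) *
      ((∏ r, ∏ s > r, (joukowskiNode q x ⟨s, j s⟩ - joukowskiNode q x ⟨r, j r⟩)) *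
        ∏ r, ∏ s > r, (joukowskiNode q x ⟨s, y s⟩ - joukowskiNode q x ⟨r, y r⟩)⁻¹) := by
  have hadd (s : Fin ℓ) : x s * q ^ j s * q ^ (y s - j s) = x s * q ^ y s := by
    rw [mul_assoc, ← pow_add, Nat.add_sub_cancel' (hjy s)]
  have hfactor (m : Fin ℓ → ℕ) (r s : Fin ℓ) :
      1 - x r * x s * q ^ ((m r : ℤ) + m s) = 1 - x r * q ^ m r * (x s * q ^ m s) := by
    rw [← Nat.cast_add, zpow_natCast, pow_add]
    ring
  have hsign : (-1 : ℂ) ^ (∑ s, (y s - j s)) * q ^ (∑ s, (y s - j s)).choose 2 ≠ 0 :=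
    mul_ne_zero (pow_ne_zero _ (neg_ne_zero.2 one_ne_zero)) (pow_ne_zero _ hq)
  have hsolve {D V V' W W' N c : ℂ} (hc : c ≠ 0) (hV : V ≠ 0) (hW : W ≠ 0) (hW' : W' ≠ 0)
      (h : D * (W' * V) = c * N * (W * V')) : D⁻¹ * (W / W') * c = N⁻¹ * (V * V'⁻¹) := by
    rw [eq_div_of_mul_eq (mul_ne_zero hW' hV) h]
    field_simp
  have hprod := prod_starDenom_mul hq (fun r => mul_ne_zero (hx r) (pow_ne_zero (j r) hq))
    fun r => y r - j r
  simp only [nodeDenom_eq_prod_node_sub hjy, starDenom_eq_qp_mul_qp hq hjy, hadd] at hprod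
  rw [MCstar, mul_assoc (_ * _), neg_one_zpow_mul_zpow_sub_sum q hjy]
  simp only [← Finset.prod_filter, Finset.filter_lt_eq_Ioi, hfactor, ← mul_inv,
    Finset.prod_inv_distrib, Finset.prod_div_distrib]
  simp only [Finset.prod_mul_distrib (s := Ioi _), Finset.prod_mul_distrib (s := univ)] at hprod ⊢
  exact hsolve hsign (prod_Ioi_node_sub_ne_zero hnode j)
    (prod_Ioi_one_sub_mul_ne_zero hq hx hnode j)
    (prod_Ioi_one_sub_mul_ne_zero hq hx hnode y) hprod

lemma MC_mul_MCstar (hq : q ≠ 0) (hx : ∀ k, x k ≠ 0)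
    (hnode : Function.Injective (joukowskiNode q x)) {i j y : Fin ℓ → ℕ} (hjy : j ≤ y)
    (hyi : y ≤ i) :
    MC ℓ q x i y * MCstar ℓ q x y j =
      (∏ r, ∏ _s : Fin ℓ, ∏ t ∈ Ioc (j r) (i r), (-(x r * q ^ t))⁻¹) *
        (∏ r, ∏ s > r, (joukowskiNode q x ⟨s, j s⟩ - joukowskiNode q x ⟨r, j r⟩)) *
      ((∏ r, ∏ s, ∏ t ∈ (Icc (j r) (i r)).erase (y r),
          (joukowskiNode q x ⟨s, y s⟩ - joukowskiNode q x ⟨r, t⟩)⁻¹) *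
        ∏ r, ∏ s > r, (joukowskiNode q x ⟨s, y s⟩ - joukowskiNode q x ⟨r, y r⟩)⁻¹) := by
  rw [MC_eq_prod_node_sub hq hx hyi, MCstar_eq_prod_node_sub hq hx hnode hjy]
  simp only [← prod_Ico_mul_prod_Ioc _ (hjy _) (hyi _),
    ← Finset.prod_Ioc_consecutive _ (hjy _) (hyi _), Finset.prod_mul_distrib (s := univ)]
  ring

theorem sum_MC_mul_MCstar (hq : q ≠ 0) (hx : ∀ k, x k ≠ 0)
    (hnode : Function.Injective (joukowskiNode q x)) (i j : Fin ℓ → ℕ) :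
    ∑ y ∈ Icc j i, MC ℓ q x i y * MCstar ℓ q x y j = if i = j then 1 else 0 := by
  split_ifs with hij
  · subst hij
    rw [Finset.Icc_self, Finset.sum_singleton, MC_mul_MCstar hq hx hnode le_rfl le_rfl]
    simp only [Finset.Ioc_self, Finset.Icc_self, Finset.erase_singleton, Finset.prod_empty,
      Finset.prod_const_one, Finset.prod_inv_distrib, inv_one, one_mul]
    exact mul_inv_cancel₀ (prod_Ioi_node_sub_ne_zero hnode i)
  · by_cases hji : j ≤ i
    · have hcard : ℓ < ∑ k, #(Icc (j k) (i k)) := by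
        obtain ⟨k, hk⟩ := (Pi.lt_def.1 (lt_of_le_of_ne hji (Ne.symm hij))).2
        calc ℓ = ∑ _k : Fin ℓ, 1 := by simp
          _ < ∑ k, #(Icc (j k) (i k)) :=
            Finset.sum_lt_sum (fun k _ => Finset.card_pos.2 (Finset.nonempty_Icc.2 (hji k)))
              ⟨k, Finset.mem_univ k, by rw [Nat.card_Icc]; omega⟩
      rw [Finset.sum_congr rfl fun y hy => MC_mul_MCstar hq hx hnode (Finset.mem_Icc.1 hy).1
        (Finset.mem_Icc.1 hy).2, ← Finset.mul_sum, Pi.Icc_eq,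
        sum_piFinset_inv_prod_sub_eq_zero (fun k => Icc (j k) (i k)) hnode.injOn hcard, mul_zero]
    · rw [Finset.Icc_eq_empty hji, Finset.sum_empty]

end Matrices

section Genericity

variable {ℓ : ℕ} {q : ℂ} {x : Fin ℓ → ℂ}

lemma mul_pow_ne_of_qp_ne_zero (hq : q ≠ 0) {a b : ℂ} (hb : b ≠ 0) {m n k : ℕ} (hnm : n < m)
    (h : qp (q * (a / b) * q ^ ((n : ℤ) - k)) q ((m : ℤ) - n) ≠ 0) :
    a * q ^ m ≠ b * q ^ k := by
  rw [qp_mul_div_mul_zpow_sub hq a b hnm.le k, Finset.prod_ne_zero_iff] at h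
  obtain ⟨t, rfl⟩ := Nat.exists_eq_add_of_lt hnm
  have hlast := h t (Finset.mem_range.2 (by omega))
  rwa [mul_assoc a, ← pow_add, ← Nat.add_assoc, sub_ne_zero, ne_comm, ne_eq,
    div_eq_one_iff_eq (mul_ne_zero hb (pow_ne_zero k hq))] at hlast

lemma mul_pow_ne_mul_pow (hq : q ≠ 0) (hx : ∀ k, x k ≠ 0)
    (hd1 : ∀ i j : Fin ℓ → ℕ, (∀ k, j k ≤ i k) → ∀ r s : Fin ℓ,
      qp (q * (x r / x s) * q ^ ((j r : ℤ) - (j s : ℤ))) q ((i r : ℤ) - (j r : ℤ)) ≠ 0)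
    {p p' : (_ : Fin ℓ) × ℕ} (hp : p ≠ p') : x p.1 * q ^ p.2 ≠ x p'.1 * q ^ p'.2 := by
  obtain ⟨r, m⟩ := p
  obtain ⟨s, n⟩ := p'
  by_cases hrs : r = s
  · subst hrs
    have hlt {m n : ℕ} (hmn : m < n) : x r * q ^ n ≠ x r * q ^ m :=
      mul_pow_ne_of_qp_ne_zero hq (hx r) hmn (hd1 (fun _ => n) (fun _ => m) (fun _ => hmn.le) r r)
    rcases lt_trichotomy m n with hmn | rfl | hmn
    · exact (hlt hmn).symm
    · exact absurd rfl hp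
    · exact hlt hmn
  · have hle (k : Fin ℓ) : Function.update (0 : Fin ℓ → ℕ) s (n + 1) k ≤
        Function.update (fun _ => n + 1) r (m + 1) k := by
      rcases eq_or_ne k s with rfl | hk
      · rw [Function.update_self, Function.update_of_ne (Ne.symm hrs)]
      · rw [Function.update_of_ne hk]
        exact Nat.zero_le _
    have h := hd1 _ _ hle r s
    rw [Function.update_self, Function.update_self, Function.update_of_ne hrs] at h
    have hne := mul_pow_ne_of_qp_ne_zero hq (hx s) m.succ_pos h
    exact fun heq => hne (by rw [pow_succ, pow_succ, ← mul_assoc, ← mul_assoc, heq])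

lemma mul_pow_mul_mul_pow_ne_one
    (hd2 : ∀ i j : Fin ℓ → ℕ, (∀ k, j k ≤ i k) → ∀ r s : Fin ℓ,
      qp (q * (x r * x s) * q ^ ((j r : ℤ) + (j s : ℤ))) q ((i r : ℤ) - (j r : ℤ)) ≠ 0)
    (hd4 : ∀ (i : Fin ℓ → ℕ) (r s : Fin ℓ), r < s →
      (1 : ℂ) - x r * x s * q ^ ((i r : ℤ) + (i s : ℤ)) ≠ 0)
    {p p' : (_ : Fin ℓ) × ℕ} (hp : p ≠ p') : x p.1 * q ^ p.2 * (x p'.1 * q ^ p'.2) ≠ 1 := by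
  obtain ⟨r, m⟩ := p
  obtain ⟨s, n⟩ := p'
  have hlt {r s : Fin ℓ} (hrs : r < s) (m n : ℕ) : x r * q ^ m * (x s * q ^ n) ≠ 1 := by
    have h := hd4 (Function.update (fun _ => n) r m) r s hrs
    rw [Function.update_self, Function.update_of_ne hrs.ne', ← Nat.cast_add, zpow_natCast,
      pow_add, sub_ne_zero, ne_comm] at h
    rwa [mul_mul_mul_comm]
  rcases lt_trichotomy r s with hrs | rfl | hrs
  · exact hlt hrs m n
  · have hpos : 0 < m + n := by
      have : m ≠ n := fun h => hp (by rw [h])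
      omega
    have h := hd2 (fun _ => m + n) (fun _ => 0) (fun _ => Nat.zero_le _) r r
    rw [qp_mul_zpow_add _ _ (Nat.zero_le _), Finset.prod_ne_zero_iff] at h
    have hlast := h (m + n - 1) (Finset.mem_range.2 (by omega))
    rw [sub_ne_zero, ne_comm, zero_add, zero_add, mul_right_comm, ← pow_succ',
      Nat.sub_add_cancel hpos, mul_comm, pow_add] at hlast
    rwa [mul_mul_mul_comm]
  · rw [mul_comm]
    exact hlt hrs n m

lemma joukowskiNode_injective (hq : q ≠ 0) (hx : ∀ k, x k ≠ 0)
    (hd1 : ∀ i j : Fin ℓ → ℕ, (∀ k, j k ≤ i k) → ∀ r s : Fin ℓ,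
      qp (q * (x r / x s) * q ^ ((j r : ℤ) - (j s : ℤ))) q ((i r : ℤ) - (j r : ℤ)) ≠ 0)
    (hd2 : ∀ i j : Fin ℓ → ℕ, (∀ k, j k ≤ i k) → ∀ r s : Fin ℓ,
      qp (q * (x r * x s) * q ^ ((j r : ℤ) + (j s : ℤ))) q ((i r : ℤ) - (j r : ℤ)) ≠ 0)
    (hd4 : ∀ (i : Fin ℓ → ℕ) (r s : Fin ℓ), r < s →
      (1 : ℂ) - x r * x s * q ^ ((i r : ℤ) + (i s : ℤ)) ≠ 0) :
    Function.Injective (joukowskiNode q x) := by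
  intro p p' h
  by_contra hp
  have hpt (p : (_ : Fin ℓ) × ℕ) : x p.1 * q ^ p.2 ≠ 0 :=
    mul_ne_zero (hx p.1) (pow_ne_zero p.2 hq)
  rcases (joukowski_eq_joukowski_iff (hpt p) (hpt p')).1 h with heq | hmul
  · exact mul_pow_ne_mul_pow hq hx hd1 hp heq
  · exact mul_pow_mul_mul_pow_ne_one hd2 hd4 hp hmul

end Genericity

/-- **C_ℓ Bailey Transform, first orthogonality relation.**
For generic parameters, `∑_{j ≤ y ≤ i} M(i;y) M*(y;j) = ∏_k δ(i_k, j_k)`. -/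
theorem Cl_bailey_transform_first (ℓ : ℕ) (hℓ : 1 ≤ ℓ) (q : ℂ)
    (hq : q ≠ 0) (x : Fin ℓ → ℂ) (hx : ∀ k, x k ≠ 0)
    (hd1 : ∀ i j : Fin ℓ → ℕ, (∀ k, j k ≤ i k) → ∀ r s : Fin ℓ,
      qp (q * (x r / x s) * q ^ ((j r : ℤ) - (j s : ℤ))) q ((i r : ℤ) - (j r : ℤ)) ≠ 0)
    (hd2 : ∀ i j : Fin ℓ → ℕ, (∀ k, j k ≤ i k) → ∀ r s : Fin ℓ,
      qp (q * (x r * x s) * q ^ ((j r : ℤ) + (j s : ℤ))) q ((i r : ℤ) - (j r : ℤ)) ≠ 0)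
    (hd3 : ∀ i j : Fin ℓ → ℕ, (∀ k, j k ≤ i k) → ∀ r s : Fin ℓ,
      qp ((x r * x s) * q ^ ((j r : ℤ) + (i s : ℤ))) q ((i r : ℤ) - (j r : ℤ)) ≠ 0)
    (hd4 : ∀ (i : Fin ℓ → ℕ) (r s : Fin ℓ), r < s →
      (1 : ℂ) - x r * x s * q ^ ((i r : ℤ) + (i s : ℤ)) ≠ 0) :
    ∀ i j : Fin ℓ → ℕ,
      ∑ y ∈ Finset.Icc j i, MC ℓ q x i y * MCstar ℓ q x y j =
        ∏ k, (if i k = j k then (1 : ℂ) else 0) := by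
  intro i j
  have hnode := joukowskiNode_injective hq hx hd1 hd2 hd4
  simp only [sum_MC_mul_MCstar hq hx hnode, Finset.prod_ite_zero, Finset.prod_const_one,
    Finset.mem_univ, true_implies, funext_iff]
end

section
/- (C_ℓ Bailey Transform, second orthogonality relation.) Let ℓ ≥ 1, let q, x_1, …, x_ℓ be nonzero complex numbers such that every q-shifted factorial occurring in a denominator below is nonzero. With M(i;j) := ∏_{r,s=1}^{ℓ} [ ((q x_r/x_s) q^{j_r−j_s}; q)_{i_r−j_r}^{−1} · (q x_r x_s q^{j_r+j_s}; q)_{i_r−j_r}^{−1} ] and M*(i;j) := ∏_{r,s=1}^{ℓ} [ ((q x_r/x_s) q^{j_r−j_s}; q)_{i_r−j_r}^{−1} · (x_r x_s q^{j_r+i_s}; q)_{i_r−j_r}^{−1} ] · ∏_{1≤r<s≤ℓ} (1 − x_r x_s q^{j_r+j_s})/(1 − x_r x_s q^{i_r+i_s}) · (−1)^{|i|−|j|} q^{binom(|i|−|j|,2)}, for all vectors i, j of nonnegative integers of length ℓ, the sum over all vectors y with j_k ≤ y_k ≤ i_k for k = 1, …, ℓ of M*(i;y)·M(y;j) equals ∏_{k=1}^{ℓ}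 δ(i_k, j_k), where δ(r,s) = 1 if r = s and 0 otherwise. (Together with the first orthogonality relation this says M and M* are mutually inverse infinite lower-triangular matrices.) -/
set_option autoImplicit false
set_option maxHeartbeats 1000000

open Finset

/-!
Write `P_r = x_r q^{y_r}`. A coordinate `p` with `i_p = j_p` contributes a constant factor to every
summand, so it can be removed and `ℓ` drops by one. If `j_s < i_s` for all `s`, the summand is, up
to a constant,

  `∏_r g(P_r) / ∏_{b ≠ P_r} (P_r - b) · ∏_{r < s} (P_s - P_r) (1 - P_r P_s)`,

where `b` runs over all nodes `x_s q^k`, `j_s ≤ k ≤ i_s`, and `g` is a polynomial that is the same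
for all `r`. Since `(P_s - P_r) (1 - P_r P_s) = P_s (1 + P_r²) - P_r (1 + P_s²)`, the last product
is a projective Vandermonde determinant, so the sum over `y` is the determinant of the matrix with
rows `r` and entries `∑_t g(v) v^k (1 + v²)^{ℓ-1-k} / ∏_{b ≠ v} (v - b)`, `v = x_r q^t`. The sum of
all its rows consists of divided differences, over all nodes, of polynomials of too small degree:
it is zero.
-/

section Transversals

open Polynomial

theorem sum_piFinset_prod_mul_projVandermonde {R κ : Type*} [CommRing R] {n : ℕ}
    (T : Fin n → Finset κ) (w a b : Fin n → κ → R) :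
    ∑ y ∈ Fintype.piFinset T, (∏ r, w r (y r)) *
        ∏ r, ∏ s ∈ Ioi r, (a s (y s) * b r (y r) - a r (y r) * b s (y s)) =
      (Matrix.of fun r k : Fin n =>
        ∑ t ∈ T r, w r t * (a r t ^ (k : ℕ) * b r t ^ (k.rev : ℕ))).det := by
  classical
  have row_eq_sum : (Matrix.of fun r k : Fin n =>
      ∑ t ∈ T r, w r t * (a r t ^ (k : ℕ) * b r t ^ (k.rev : ℕ))) =
      fun r => ∑ t ∈ T r, fun k : Fin n => w r t * (a r t ^ (k : ℕ) * b r t ^ (k.rev : ℕ)) := by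
    ext r k
    simp [Finset.sum_apply]
  rw [row_eq_sum]
  refine Eq.trans (sum_congr rfl fun y _ => ?_)
    (Matrix.detRowAlternating.toMultilinearMap.map_sum_finset _ T).symm
  rw [← Matrix.det_projVandermonde, ← Matrix.det_mul_column]
  rfl

theorem sum_eval_div_prod_sub_eq_zero {K ι : Type*} [Field K] [DecidableEq ι]
    {T : Finset ι} {v : ι → K} (hv : Set.InjOn v T) {f : K[X]} (hf : f.natDegree + 1 < #T) :
    ∑ a ∈ T, f.eval (v a) / ∏ b ∈ T.erase a, (v a - v b) = 0 := by
  have degree_lt : f.degree < #T := degree_le_natDegree.trans_lt (by exact_mod_cast by omega)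
  rw [← Lagrange.coeff_eq_sum hv degree_lt]
  exact coeff_eq_zero_of_natDegree_lt (by omega)

theorem sum_transversals_eq_zero {K κ : Type*} [Field K] [DecidableEq κ] {n : ℕ} (hn : 0 < n)
    {T : Fin n → Finset κ} {v : (_ : Fin n) × κ → K} (hv : Set.InjOn v (univ.sigma T))
    {g : K[X]} (hg : g.natDegree + 2 * (n - 1) + 1 < ∑ r, #(T r)) :
    ∑ y ∈ Fintype.piFinset T,
      (∏ r, g.eval (v ⟨r, y r⟩) / ∏ b ∈ (univ.sigma T).erase ⟨r, y r⟩, (v ⟨r, y r⟩ - v b)) *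
        ∏ r, ∏ s ∈ Ioi r, (v ⟨s, y s⟩ - v ⟨r, y r⟩) * (1 - v ⟨r, y r⟩ * v ⟨s, y s⟩) = 0 := by
  have : NeZero n := ⟨hn.ne'⟩
  have factor_eq (a b : K) : (b - a) * (1 - a * b) = b * (1 + a ^ 2) - a * (1 + b ^ 2) := by ring
  simp only [factor_eq]
  rw [sum_piFinset_prod_mul_projVandermonde T
    (fun r t => g.eval (v ⟨r, t⟩) / ∏ b ∈ (univ.sigma T).erase ⟨r, t⟩, (v ⟨r, t⟩ - v b))
    (fun r t => v ⟨r, t⟩) (fun r t => 1 + v ⟨r, t⟩ ^ 2), ← Matrix.exists_vecMul_eq_zero_iff]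
  refine ⟨1, one_ne_zero, funext fun k => ?_⟩
  have natDegree_le : (g * (X ^ (k : ℕ) * (1 + X ^ 2) ^ (k.rev : ℕ))).natDegree ≤
      g.natDegree + 2 * (n - 1) := by
    refine natDegree_mul_le.trans (Nat.add_le_add_left ?_ _)
    compute_degree
    omega
  have divided_difference := sum_eval_div_prod_sub_eq_zero hv
    (f := g * (X ^ (k : ℕ) * (1 + X ^ 2) ^ (k.rev : ℕ))) (by rw [card_sigma]; omega)
  rw [sum_sigma] at divided_difference
  simp only [Matrix.vecMul, dotProduct, Pi.one_apply, one_mul, Matrix.of_apply, Pi.zero_apply]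
  rw [← divided_difference]
  refine sum_congr rfl fun r _ => sum_congr rfl fun t _ => ?_
  simp only [eval_mul, eval_pow, eval_add, eval_X, eval_one]
  ring

end Transversals

section IntervalProducts

variable {M α : Type*} [CommMonoid M] [LinearOrder α] [LocallyFiniteOrder α] {a b c d m : α}

theorem prod_Ioc_mul_prod_Ioc (f : α → M) (ham : a ≤ m) (hmb : m ≤ b) :
    (∏ e ∈ Ioc a m, f e) * ∏ e ∈ Ioc m b, f e = ∏ e ∈ Ioc a b, f e := by
  rw [← prod_union (Ioc_disjoint_Ioc_of_le le_rfl), Ioc_union_Ioc_eq_Ioc ham hmb]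

theorem prod_Ico_mul_prod_Icc (f : α → M) (ham : a ≤ m) (hmb : m ≤ b) :
    (∏ e ∈ Ico a m, f e) * ∏ e ∈ Icc m b, f e = ∏ e ∈ Icc a b, f e := by
  rw [← prod_union]
  · congr 1
    ext e
    simp only [mem_union, mem_Ico, mem_Icc]
    grind
  · exact disjoint_left.2 fun e h₁ h₂ => (mem_Ico.1 h₁).2.not_ge (mem_Icc.1 h₂).1

theorem prod_Ico_mul_mul_prod_Ioc (f : α → M) (ham : a ≤ m) (hmb : m ≤ b) :
    (∏ e ∈ Ico a m, f e) * (f m * ∏ e ∈ Ioc m b, f e) = ∏ e ∈ Icc a b, f e := by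
  rw [mul_prod_Ioc_eq_prod_Icc hmb, prod_Ico_mul_prod_Icc f ham hmb]

theorem prod_Icc_mul_prod_Icc_comm (f : α → M) (ham : a ≤ m) (hmb : m ≤ b) (hcm : c ≤ m)
    (hmd : m ≤ d) :
    (∏ e ∈ Icc a b, f e) * ∏ e ∈ Icc c d, f e = (∏ e ∈ Icc a d, f e) * ∏ e ∈ Icc c b, f e := by
  simp only [← prod_Ico_mul_prod_Icc f ham, ← prod_Ico_mul_prod_Icc f hcm, hmb, hmd]
  ac_rfl

theorem prod_Icc_erase (f : α → M) (ham : a ≤ m) (hmb : m ≤ b) :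
    ∏ e ∈ (Icc a b).erase m, f e = (∏ e ∈ Ico a m, f e) * ∏ e ∈ Ioc m b, f e := by
  rw [← prod_union]
  · congr 1
    ext e
    simp only [mem_erase, mem_Icc, mem_union, mem_Ico, mem_Ioc]
    grind
  · exact disjoint_left.2 fun e h₁ h₂ => (mem_Ico.1 h₁).2.not_gt (mem_Ioc.1 h₂).1

theorem prod_Ioc_mul_prod_Ioo_mul_prod_Ico (f : α → M) (hab : a ≤ b) (hbc : b < c) (hcd : c ≤ d) :
    (∏ e ∈ Ioc a b, f e) * (∏ e ∈ Ioo b c, f e) * ∏ e ∈ Ico c d, f e = ∏ e ∈ Ioo a d, f e := by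
  rw [← prod_union, ← prod_union]
  · congr 1
    ext e
    simp only [mem_union, mem_Ioc, mem_Ioo, mem_Ico]
    grind
  all_goals
    refine disjoint_left.2 fun e => ?_
    simp only [mem_union, mem_Ioc, mem_Ioo, mem_Ico]
    grind

end IntervalProducts

/-- The product `∏_{e ∈ s} (1 - u q^e)` over a finite set of integer exponents. Every `q`-shifted
factorial below is such a product over an interval. -/
noncomputable def qProd {K : Type*} [Field K] (u q : K) (s : Finset ℤ) : K :=
  ∏ e ∈ s, (1 - u * q ^ e)

/-- The two `q`-shifted factorials with parameter `u = x_r / x_s` in a summand of the orthogonality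
relation, one from each matrix. Here `m` and `n` are the summation indices at `r` and `s`, the
former ranging over `[j, i]`, and `j'` is the lower bound of the latter. -/
noncomputable def ratioPair {K : Type*} [Field K] (u q : K) (i j j' m n : ℤ) : K :=
  qProd u q (Ioc (m - n) (i - n)) * qProd u q (Ioc (j - j') (m - j'))

/-- The two `q`-shifted factorials with parameter `c = x_r x_s` in a summand of the orthogonality
relation, one from each matrix. Here `m` is the summation index at `r`, ranging over `[j, i]`, and
the one at `s` ranges over `[j', i']`. -/
noncomputable def prodPair {K : Type*} [Field K] (c q : K) (i j i' j' m : ℤ) : K :=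
  qProd c q (Ico (m + i') (i + i')) * qProd c q (Ioc (j + j') (m + j'))

section QProd

variable {K : Type*} [Field K] {q u a b : K}

theorem qProd_ne_zero {s : Finset ℤ} (h : ∀ e ∈ s, u * q ^ e ≠ 1) : qProd u q s ≠ 0 :=
  prod_ne_zero_iff.2 fun e he => sub_ne_zero.2 (h e he).symm

theorem qProd_inv_Ioc_sub (hq : q ≠ 0) (hu : u ≠ 0) (m : ℤ) {k l : ℤ} (hkl : k ≤ l) :
    qProd u⁻¹ q (Ioc (k - m) (l - m)) =
      q ^ (-(m * (l - k))) * (∏ e ∈ Ioc k l, -(u⁻¹ * q ^ e)) * qProd u q (Ico (m - l) (m - k)) := by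
  have reflect : qProd u q (Ico (m - l) (m - k)) = ∏ e ∈ Ioc k l, (1 - u * q ^ (m - e)) :=
    prod_nbij' (m - ·) (m - ·) (by grind) (by grind) (by grind) (by grind) (by grind)
  have shift : qProd u⁻¹ q (Ioc (k - m) (l - m)) = ∏ e ∈ Ioc k l, (1 - u⁻¹ * q ^ (e - m)) :=
    prod_nbij' (· + m) (· - m) (by grind) (by grind) (by grind) (by grind) (by grind)
  have scale : q ^ (-(m * (l - k))) = ∏ _e ∈ Ioc k l, q ^ (-m) := by
    rw [prod_const, Int.card_Ioc, ← zpow_natCast, ← zpow_mul, Int.toNat_of_nonneg (by omega)]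
    ring_nf
  rw [reflect, shift, scale, ← prod_mul_distrib, ← prod_mul_distrib]
  refine prod_congr rfl fun e _ => ?_
  rw [zpow_sub₀ hq, zpow_sub₀ hq, zpow_neg]
  field_simp
  ring

theorem prod_Icc_sub_eq_qProd (hq : q ≠ 0) (hb : b ≠ 0) (m : ℤ) (j i : ℕ) :
    ∏ k ∈ Icc j i, (a * q ^ m - b * q ^ k) =
      (∏ k ∈ Icc j i, -(b * q ^ k)) * qProd (a / b) q (Icc (m - i) (m - j)) := by
  have reflect : qProd (a / b) q (Icc (m - i) (m - j)) =
      ∏ k ∈ Icc j i, (1 - a / b * q ^ (m - k)) :=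
    prod_nbij' (fun e => (m - e).toNat) (m - ·) (by grind) (by grind) (by grind) (by grind)
      (by grind)
  rw [reflect, ← prod_mul_distrib]
  refine prod_congr rfl fun k _ => ?_
  rw [zpow_sub₀ hq, zpow_natCast]
  field_simp
  ring

theorem prod_Icc_sub_eq_pow_mul_qProd (hq : q ≠ 0) (hb : b ≠ 0) (n : ℤ) (j i : ℕ) :
    ∏ k ∈ Icc j i, (b * q ^ n - a * q ^ k) =
      (b * q ^ n) ^ (i + 1 - j) * qProd (a / b) q (Icc (j - n) (i - n)) := by
  have shift : qProd (a / b) q (Icc (j - n) (i - n)) = ∏ k ∈ Icc j i, (1 - a / b * q ^ (k - n)) :=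
    prod_nbij' (fun e => (e + n).toNat) (fun k => (k : ℤ) - n) (by grind) (by grind) (by grind)
      (by grind) (by grind)
  rw [shift, ← Nat.card_Icc, ← prod_const, ← prod_mul_distrib]
  refine prod_congr rfl fun k _ => ?_
  rw [zpow_sub₀ hq, zpow_natCast]
  field_simp

-- Reflecting the parameter `b / a` to `a / b` turns the four intervals into two complete ones,
-- which share only the points `j - j'` and `m - n` with each other.
theorem ratioPair_mul_ratioPair_mul (hq : q ≠ 0) (ha : a ≠ 0) (hb : b ≠ 0) {i j i' j' m n : ℤ}
    (hjm : j ≤ m) (hmi : m ≤ i) (hjn : j' ≤ n) (hni : n ≤ i') :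
    ratioPair (a / b) q i j j' m n * ratioPair (b / a) q i' j' j n m *
        ((1 - a / b * q ^ (j - j')) * (1 - a / b * q ^ (m - n))) =
      q ^ (-(m * (i' - n) + j * (n - j'))) * (∏ e ∈ Ioc j' i', -(b / a * q ^ e)) *
        (qProd (a / b) q (Icc (m - i') (m - j')) * qProd (a / b) q (Icc (j - n) (i - n))) := by
  have hab : a / b ≠ 0 := div_ne_zero ha hb
  rw [ratioPair, ratioPair, ← inv_div a b, qProd_inv_Ioc_sub hq hab m hni,
    qProd_inv_Ioc_sub hq hab j hjn, ← prod_Ioc_mul_prod_Ioc _ hjn hni, neg_add, zpow_add₀ hq]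
  unfold qProd
  rw [prod_Icc_mul_prod_Icc_comm (m := m - n) _ (by omega) (by omega) (by omega) (by omega),
    ← prod_Ico_mul_mul_prod_Ioc (m := m - n) _ (by omega : m - i' ≤ _) (by omega),
    ← prod_Ico_mul_mul_prod_Ioc (m := j - j') _ (by omega : j - n ≤ _) (by omega)]
  ring

theorem pow_mul_zpow_mul_pow_eq (hq : q ≠ 0) {i j i' j' m n : ℕ} (hjm : j ≤ m) (hmi : m ≤ i)
    (hni : n ≤ i') :
    q ^ ((i - m) * (i' - n)) * q ^ ((m * (i' - n) + j * (n - j') : ℤ)) * (b * q ^ n) ^ (i - j) =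
      b ^ (i - j) * q ^ ((i : ℤ) * i' - j * j') := by
  rw [mul_pow, ← pow_mul, mul_left_comm, ← zpow_natCast q, ← zpow_natCast q, ← zpow_add₀ hq,
    ← zpow_add₀ hq]
  push_cast [Nat.cast_sub hmi, Nat.cast_sub hni, Nat.cast_sub (hjm.trans hmi)]
  ring_nf

theorem inv_ratioPair_mul_ratioPair_mul_pow (hq : q ≠ 0) (ha : a ≠ 0) (hb : b ≠ 0)
    (hab : ∀ e : ℤ, a / b * q ^ e ≠ 1) (i j i' j' : ℕ) :
    ∃ c, ∀ m n : ℕ, m ∈ Icc j i → n ∈ Icc j' i' →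
      (ratioPair (a / b) q i j j' m n * ratioPair (b / a) q i' j' j n m)⁻¹ *
          q ^ ((i - m) * (i' - n)) =
        c * ((b * q ^ n - a * q ^ m) / ((∏ k ∈ Icc j' i', (a * q ^ m - b * q ^ k)) *
          ∏ k ∈ Icc j i, (b * q ^ n - a * q ^ k))) := by
  have one_sub_ne (e : ℤ) : 1 - a / b * q ^ e ≠ 0 := sub_ne_zero.2 (hab e).symm
  refine ⟨(1 - a / b * q ^ ((j : ℤ) - j')) * (∏ k ∈ Icc j' i', -(b * q ^ k)) *
    (∏ e ∈ Ioc (j' : ℤ) i', -(b / a * q ^ e))⁻¹ * b ^ (i - j) * q ^ ((i : ℤ) * i' - j * j'),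
    fun m n hm hn => ?_⟩
  obtain ⟨hjm, hmi⟩ := mem_Icc.1 hm
  obtain ⟨hjn, hni⟩ := mem_Icc.1 hn
  have pair_eq := eq_div_of_mul_eq (mul_ne_zero (one_sub_ne _) (one_sub_ne _)) <|
    ratioPair_mul_ratioPair_mul hq ha hb (Int.ofNat_le.2 hjm) (Int.ofNat_le.2 hmi)
      (Int.ofNat_le.2 hjn) (Int.ofNat_le.2 hni)
  have nodes_row := prod_Icc_sub_eq_qProd (a := a) hq hb m j' i'
  have nodes_col := prod_Icc_sub_eq_pow_mul_qProd (a := a) hq hb n j i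
  have node_sub : b * q ^ n - a * q ^ m = b * q ^ n * (1 - a / b * q ^ ((m : ℤ) - n)) := by
    rw [zpow_sub₀ hq, zpow_natCast, zpow_natCast]
    field_simp
  have power_eq := pow_mul_zpow_mul_pow_eq (b := b) (j' := j') hq hjm hmi hni
  simp only [zpow_natCast] at nodes_row nodes_col
  rw [nodes_row, nodes_col, node_sub, pair_eq, show i + 1 - j = i - j + 1 by omega, pow_succ,
    zpow_neg]
  have row_scale_ne : ∏ k ∈ Icc j' i', -(b * q ^ k) ≠ 0 := by simp [prod_ne_zero_iff, hb, hq]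
  have := mul_ne_zero hb (pow_ne_zero n hq)
  have ratio_ne := one_sub_ne (m - n)
  generalize 1 - a / b * q ^ ((m : ℤ) - n) = ρ, 1 - a / b * q ^ ((j : ℤ) - j') = σ,
    b * q ^ n = γ, ∏ k ∈ Icc j' i', -(b * q ^ k) = κ,
    ∏ e ∈ Ioc (j' : ℤ) i', -(b / a * q ^ e) = Γ, qProd (a / b) q (Icc ((m : ℤ) - i') (m - j')) = A,
    qProd (a / b) q (Icc ((j : ℤ) - n) (i - n)) = B at *
  field_simp
  linear_combination σ / (Γ * A * B) * power_eq

theorem neg_one_pow_mul_pow_choose_mul_pow (m i : ℕ) :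
    (-1) ^ (i - m) * q ^ (i - m).choose 2 * (a * q ^ m) ^ (i - m) =
      ∏ k ∈ Ico m i, -(a * q ^ k) := by
  have termwise (k : ℕ) : -(a * q ^ (m + k)) = -1 * q ^ k * (a * q ^ m) := by ring
  rw [prod_Ico_eq_prod_range, prod_congr rfl fun k _ => termwise k, prod_mul_distrib,
    prod_mul_distrib, prod_pow_eq_pow_sum, sum_range_id, Nat.choose_two_right]
  simp only [prod_const, card_range]

theorem prod_Icc_erase_sub (hq : q ≠ 0) {j m i : ℕ} (hjm : j ≤ m) (hmi : m ≤ i) :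
    ∏ k ∈ (Icc j i).erase m, (a * q ^ m - a * q ^ k) =
      (∏ k ∈ Ico j m, -(a * q ^ k)) * (a * q ^ m) ^ (i - m) *
        (qProd 1 q (Ioc 0 (i - m)) * qProd 1 q (Ioc 0 (m - j))) := by
  have below : qProd 1 q (Ioc 0 (m - j)) = ∏ k ∈ Ico j m, (1 - q ^ ((m : ℤ) - k)) :=
    prod_nbij' (fun e => (m - e).toNat) (fun k => (m : ℤ) - k) (by grind) (by grind) (by grind)
      (by grind) (by grind)
  have above : qProd 1 q (Ioc 0 (i - m)) = ∏ k ∈ Ioc m i, (1 - q ^ ((k : ℤ) - m)) :=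
    prod_nbij' (fun e => (e + m).toNat) (fun k => (k : ℤ) - m) (by grind) (by grind) (by grind)
      (by grind) (by grind)
  rw [prod_Icc_erase _ hjm hmi, below, above, ← Nat.card_Ioc, ← prod_const, mul_mul_mul_comm,
    mul_comm (∏ k ∈ Ioc m i, _), ← mul_mul_mul_comm, ← prod_mul_distrib, ← prod_mul_distrib]
  congr 1
  all_goals
    refine prod_congr rfl fun k _ => ?_
    rw [zpow_sub₀ hq, zpow_natCast, zpow_natCast]
  · field_simp
    ring
  · field_simp

theorem inv_ratioPair_one_mul_neg_one_pow (hq : q ≠ 0) (ha : a ≠ 0) {j m i : ℕ} (hjm : j ≤ m)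
    (hmi : m ≤ i) :
    (ratioPair 1 q i j j m m)⁻¹ * ((-1) ^ (i - m) * q ^ (i - m).choose 2) =
      (∏ k ∈ Ico j i, -(a * q ^ k)) * (∏ k ∈ (Icc j i).erase m, (a * q ^ m - a * q ^ k))⁻¹ := by
  have below_ne : ∏ k ∈ Ico j m, -(a * q ^ k) ≠ 0 := by simp [prod_ne_zero_iff, ha, hq]
  rw [ratioPair, sub_self, sub_self, prod_Icc_erase_sub hq hjm hmi,
    ← prod_Ico_consecutive _ hjm hmi, ← neg_one_pow_mul_pow_choose_mul_pow m i]
  field_simp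

theorem prod_Ioo_one_sub (hq : q ≠ 0) (m j i : ℕ) :
    ∏ k ∈ Ioo j i, (1 - a * q ^ m * (b * q ^ k)) = qProd (a * b) q (Ioo (m + j) (m + i)) := by
  refine prod_nbij' (fun k => (m + k : ℤ)) (fun e => (e - m).toNat) (by grind) (by grind)
    (by grind) (by grind) fun k _ => ?_
  rw [zpow_add₀ hq, zpow_natCast, zpow_natCast]
  ring

-- For `j' = i'` the two intervals of `prodPair` overlap in `m + j'` instead of leaving a gap, which
-- is why coordinates with `i p = j p` are split off separately.
theorem inv_prodPair_mul (hq : q ≠ 0) (hab : ∀ e : ℤ, 0 < e → a * b * q ^ e ≠ 1)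
    {j m i j' i' : ℕ} (hjm : j ≤ m) (hmi : m ≤ i) (hji' : j' < i') :
    (prodPair (a * b) q i j i' j' m)⁻¹ =
      (qProd (a * b) q (Ioo (j + j') (i + i')))⁻¹ *
        ∏ k ∈ Ioo j' i', (1 - a * q ^ m * (b * q ^ k)) := by
  have merge := prod_Ioc_mul_prod_Ioo_mul_prod_Ico (fun e => 1 - a * b * q ^ e)
    (a := (j + j' : ℤ)) (b := m + j') (c := m + i') (d := i + i') (by omega) (by omega) (by omega)
  simp only [← qProd.eq_1] at merge
  have merged_ne : qProd (a * b) q (Ioo (m + j') (m + i')) ≠ 0 :=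
    qProd_ne_zero fun e he => hab e (by grind)
  rw [prodPair, prod_Ioo_one_sub hq, ← merge]
  field_simp

theorem ratioPair_self (j' n m : ℤ) : ratioPair u q n n j' n m = 1 := by
  simp [ratioPair, qProd]

theorem prodPair_self (i' j' n : ℤ) : prodPair u q n n i' j' n = 1 := by
  simp [prodPair, qProd]

theorem ratioPair_right_self {i j m : ℤ} (n : ℤ) (hjm : j ≤ m) (hmi : m ≤ i) :
    ratioPair u q i j n m n = qProd u q (Ioc (j - n) (i - n)) :=
  (mul_comm ..).trans (prod_Ioc_mul_prod_Ioc _ (by omega) (by omega))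

theorem inv_prodPair_right_self_mul {i j m n : ℤ} (hjm : j ≤ m) (hmi : m ≤ i)
    (hm : 1 - u * q ^ (m + n) ≠ 0) :
    (prodPair u q i j n n m)⁻¹ * ((1 - u * q ^ (m + n)) / (1 - u * q ^ (i + n))) =
      (qProd u q (Ioc (j + n) (i + n)))⁻¹ := by
  have telescope : prodPair u q i j n n m * (1 - u * q ^ (i + n)) =
      qProd u q (Ioc (j + n) (i + n)) * (1 - u * q ^ (m + n)) := by
    unfold prodPair qProd
    rw [← prod_Ioc_mul_prod_Ioc (a := j + n) (b := i + n) (m := m + n) _ (by omega) (by omega),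
      mul_right_comm,
      prod_Ico_mul_eq_prod_Icc (by omega), ← mul_prod_Ioc_eq_prod_Icc (by omega)]
    ring
  rw [inv_mul_eq_div, div_div, mul_comm (1 - u * q ^ (i + n)), telescope,
    div_mul_cancel_right₀ hm]

end QProd

section ProportionalOn

variable {ι κ K : Type*} [CommSemiring K] {S : Finset ι}

/-- `f` is a constant multiple of `g` on `S`. Only the vanishing of a sum is at stake in the
orthogonality relation, so the factors of a summand that do not depend on the summation index are
never computed. -/
def ProportionalOn (S : Finset ι) (f g : ι → K) : Prop :=
  ∃ c, ∀ y ∈ S, f y = c * g y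

theorem ProportionalOn.mul {f₁ f₂ g₁ g₂ : ι → K} (h₁ : ProportionalOn S f₁ g₁)
    (h₂ : ProportionalOn S f₂ g₂) :
    ProportionalOn S (fun y => f₁ y * f₂ y) fun y => g₁ y * g₂ y := by
  obtain ⟨c₁, h₁⟩ := h₁
  obtain ⟨c₂, h₂⟩ := h₂
  exact ⟨c₁ * c₂, fun y hy =>
    (congrArg₂ _ (h₁ y hy) (h₂ y hy)).trans (mul_mul_mul_comm ..)⟩

theorem ProportionalOn.prod {t : Finset κ} {f g : κ → ι → K}
    (h : ∀ r ∈ t, ProportionalOn S (f r) (g r)) :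
    ProportionalOn S (fun y => ∏ r ∈ t, f r y) fun y => ∏ r ∈ t, g r y := by
  choose! c hc using h
  exact ⟨∏ r ∈ t, c r, fun y hy =>
    (prod_congr rfl fun r hr => hc r hr y hy).trans prod_mul_distrib⟩

theorem ProportionalOn.sum_eq_zero {f g : ι → K} (h : ProportionalOn S f g)
    (hg : ∑ y ∈ S, g y = 0) : ∑ y ∈ S, f y = 0 := by
  obtain ⟨c, hc⟩ := h
  rw [sum_congr rfl hc, ← mul_sum, hg, mul_zero]

end ProportionalOn

section DoubleProducts

variable {M : Type*} [CommMonoid M] {ℓ : ℕ}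

theorem prod_prod_eq_prod_diag_mul_prod_Ioi (F : Fin ℓ → Fin ℓ → M) :
    ∏ r, ∏ s, F r s = (∏ r, F r r) * ∏ r, ∏ s ∈ Ioi r, F r s * F s r := by
  rw [prod_prod_Ioi_mul_eq_prod_prod_off_diag fun s r => F r s, ← prod_mul_distrib]
  exact prod_congr rfl fun r _ => Fintype.prod_eq_mul_prod_compl r _

theorem prod_prod_ite_lt (F : Fin ℓ → Fin ℓ → M) :
    (∏ r, ∏ s, if r < s then F r s else 1) = ∏ r, ∏ s ∈ Ioi r, F r s := by
  refine prod_congr rfl fun r _ => ?_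
  rw [← prod_filter, filter_lt_eq_Ioi]

theorem prod_prod_succAbove (F : Fin (ℓ + 1) → Fin (ℓ + 1) → M) (p : Fin (ℓ + 1)) :
    ∏ r, ∏ s, F r s = F p p * (∏ r, F (p.succAbove r) p * F p (p.succAbove r)) *
      ∏ r, ∏ s, F (p.succAbove r) (p.succAbove s) := by
  simp only [Fin.prod_univ_succAbove _ p, prod_mul_distrib]
  ac_rfl

theorem prod_erase_sigma {ι κ : Type*} [Fintype ι] [DecidableEq ι] [DecidableEq κ]
    {T : ι → Finset κ} (F : (_ : ι) × κ → M) (r : ι) (t : κ) :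
    ∏ b ∈ (univ.sigma T).erase ⟨r, t⟩, F b =
      (∏ k ∈ (T r).erase t, F ⟨r, k⟩) * ∏ s ∈ {r}ᶜ, ∏ k ∈ T s, F ⟨s, k⟩ := by
  have erase_eq : (univ.sigma T).erase ⟨r, t⟩ =
      univ.sigma fun s => if s = r then (T r).erase t else T s := by
    ext ⟨s, k⟩
    by_cases hs : s = r
    · subst hs
      simp
    · simp [hs]
  rw [erase_eq, prod_sigma, Fintype.prod_eq_mul_prod_compl r, if_pos rfl]
  exact congrArg _ <| prod_congr rfl fun s hs => by rw [if_neg (by simpa using hs)]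

theorem prod_inv_mul_prod_div_eq_prod_erase_sigma {K κ : Type*} [Field K] [DecidableEq κ]
    {T : Fin ℓ → Finset κ} (v : (_ : Fin ℓ) × κ → K) (y : Fin ℓ → κ) :
    (∏ r, (∏ k ∈ (T r).erase (y r), (v ⟨r, y r⟩ - v ⟨r, k⟩))⁻¹) *
        ∏ r, ∏ s ∈ Ioi r, (v ⟨s, y s⟩ - v ⟨r, y r⟩) /
          ((∏ k ∈ T s, (v ⟨r, y r⟩ - v ⟨s, k⟩)) * ∏ k ∈ T r, (v ⟨s, y s⟩ - v ⟨r, k⟩)) =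
      (∏ r, (∏ b ∈ (univ.sigma T).erase ⟨r, y r⟩, (v ⟨r, y r⟩ - v b))⁻¹) *
        ∏ r, ∏ s ∈ Ioi r, (v ⟨s, y s⟩ - v ⟨r, y r⟩) := by
  simp only [prod_erase_sigma, div_eq_mul_inv, mul_inv, ← prod_inv_distrib, prod_mul_distrib]
  rw [← prod_prod_Ioi_mul_eq_prod_prod_off_diag fun s r => ∏ k ∈ T s, (v ⟨r, y r⟩ - v ⟨s, k⟩)⁻¹]
  simp only [prod_mul_distrib]
  ring

end DoubleProducts

theorem choose_two_sum_eq {ℓ : ℕ} (m : Fin ℓ → ℕ) :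
    (∑ r, m r).choose 2 = ∑ r, (m r).choose 2 + ∑ r, ∑ s ∈ Ioi r, m r * m s := by
  induction ℓ with
  | zero => simp
  | succ ℓ ih =>
    have choose_two_add (a b : ℕ) : (a + b).choose 2 = a.choose 2 + b.choose 2 + a * b := by
      simp [Nat.add_choose_eq, Nat.antidiagonal_succ]
      ring
    rw [Fin.sum_univ_succ, choose_two_add, ih, Fin.sum_univ_succ, Fin.sum_univ_succ,
      Fin.sum_Ioi_zero, mul_sum]
    simp only [Fin.sum_Ioi_succ]
    ring

theorem neg_one_pow_sum_mul_pow_choose {R : Type*} [CommRing R] {ℓ : ℕ} (q : R) (m : Fin ℓ → ℕ) :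
    (-1) ^ (∑ r, m r) * q ^ (∑ r, m r).choose 2 =
      (∏ r, (-1) ^ m r * q ^ (m r).choose 2) * ∏ r, ∏ s ∈ Ioi r, q ^ (m r * m s) := by
  rw [choose_two_sum_eq, pow_add]
  simp only [prod_mul_distrib, prod_pow_eq_pow_sum]
  ring

theorem qp_mul_zpow {q : ℂ} (hq : q ≠ 0) (a : ℂ) {k l : ℤ} (hkl : k ≤ l) :
    qp (a * q ^ k) q (l - k) = qProd a q (Ico k l) := by
  rw [qp, if_pos (sub_nonneg.2 hkl)]
  refine prod_nbij' (fun t => k + t) (fun e => (e - k).toNat) (by grind) (by grind) (by grind)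
    (by grind) fun t _ => ?_
  rw [zpow_add₀ hq, mul_assoc]

theorem qp_mul_mul_zpow {q : ℂ} (hq : q ≠ 0) (a : ℂ) {k l : ℤ} (hkl : k ≤ l) :
    qp (q * a * q ^ k) q (l - k) = qProd a q (Ioc k l) := by
  rw [← Ico_add_one_add_one_eq_Ioc, ← qp_mul_zpow hq a (by omega), zpow_add_one₀ hq,
    add_sub_add_right_eq_sub]
  ring_nf

/-- The contribution of the ordered pair `(r, s)` to the summand `MCstar ℓ q x i y * MC ℓ q x y j`,
apart from the sign and the power of `q`. -/
noncomputable def summandFactor {ℓ : ℕ} (q : ℂ) (x : Fin ℓ → ℂ) (i j y : Fin ℓ → ℕ)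
    (r s : Fin ℓ) : ℂ :=
  (ratioPair (x r / x s) q (i r) (j r) (j s) (y r) (y s))⁻¹ *
    (prodPair (x r * x s) q (i r) (j r) (i s) (j s) (y r))⁻¹ *
      if r < s then
        (1 - x r * x s * q ^ ((y r : ℤ) + y s)) / (1 - x r * x s * q ^ ((i r : ℤ) + i s))
      else 1

theorem MC_eq {ℓ : ℕ} {q : ℂ} (hq : q ≠ 0) (x : Fin ℓ → ℂ) {i j : Fin ℓ → ℕ} (hji : j ≤ i) :
    MC ℓ q x i j = ∏ r, ∏ s, (qProd (x r / x s) q (Ioc ((j r : ℤ) - j s) (i r - j s)))⁻¹ *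
      (qProd (x r * x s) q (Ioc ((j r : ℤ) + j s) (i r + j s)))⁻¹ := by
  refine prod_congr rfl fun r _ => prod_congr rfl fun s _ => ?_
  have : j r ≤ i r := hji r
  rw [← qp_mul_mul_zpow hq _ (by omega), ← qp_mul_mul_zpow hq _ (by omega),
    sub_sub_sub_cancel_right, add_sub_add_right_eq_sub]

theorem intCast_mul_sub_one_div_two (n : ℕ) : (n : ℤ) * (n - 1) / 2 = (n.choose 2 : ℕ) := by
  rw [Nat.choose_two_right]
  cases n <;> simp

theorem MCstar_eq {ℓ : ℕ} {q : ℂ} (hq : q ≠ 0) (x : Fin ℓ → ℂ) {i j : Fin ℓ → ℕ} (hji : j ≤ i) :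
    MCstar ℓ q x i j =
      (∏ r, ∏ s, (qProd (x r / x s) q (Ioc ((j r : ℤ) - j s) (i r - j s)))⁻¹ *
        (qProd (x r * x s) q (Ico ((j r : ℤ) + i s) (i r + i s)))⁻¹) *
      (∏ r, ∏ s, if r < s then
        (1 - x r * x s * q ^ ((j r : ℤ) + j s)) / (1 - x r * x s * q ^ ((i r : ℤ) + i s)) else 1) *
      ((-1) ^ (∑ r, (i r - j r)) * q ^ (∑ r, (i r - j r)).choose 2) := by
  have exponent_eq : (∑ s, (i s : ℤ)) - ∑ s, (j s : ℤ) = (∑ r, (i r - j r) : ℕ) := by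
    rw [← sum_sub_distrib]
    push_cast [Nat.cast_sub (hji _)]
    rfl
  rw [MCstar, exponent_eq, intCast_mul_sub_one_div_two, zpow_natCast, zpow_natCast, mul_assoc]
  congr 2
  refine prod_congr rfl fun r _ => prod_congr rfl fun s _ => ?_
  have : j r ≤ i r := hji r
  rw [← qp_mul_mul_zpow hq _ (by omega), ← qp_mul_zpow hq _ (by omega),
    sub_sub_sub_cancel_right, add_sub_add_right_eq_sub]

theorem MCstar_mul_MC_eq {ℓ : ℕ} {q : ℂ} (hq : q ≠ 0) (x : Fin ℓ → ℂ) {i j y : Fin ℓ → ℕ}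
    (hjy : j ≤ y) (hyi : y ≤ i) :
    MCstar ℓ q x i y * MC ℓ q x y j = (∏ r, ∏ s, summandFactor q x i j y r s) *
      ((-1) ^ (∑ r, (i r - y r)) * q ^ (∑ r, (i r - y r)).choose 2) := by
  rw [MCstar_eq hq x hyi, MC_eq hq x hjy, mul_right_comm]
  simp only [← prod_mul_distrib]
  refine congrArg (· * _) <| prod_congr rfl fun r _ => prod_congr rfl fun s _ => ?_
  rw [summandFactor, ratioPair, prodPair, mul_inv, mul_inv]
  ring

/-- The parameters for which no denominator in the orthogonality relation vanishes. -/
structure IsGeneric {ℓ : ℕ} (q : ℂ) (x : Fin ℓ → ℂ) : Prop where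
  base_ne_zero : q ≠ 0
  ne_zero : ∀ r, x r ≠ 0
  div_mul_zpow_ne_one : ∀ r s (e : ℤ), r ≠ s ∨ e ≠ 0 → x r / x s * q ^ e ≠ 1
  mul_mul_zpow_ne_one : ∀ r s (e : ℤ), 0 ≤ e → r ≠ s ∨ e ≠ 0 → x r * x s * q ^ e ≠ 1

namespace IsGeneric

variable {ℓ : ℕ} {q : ℂ} {x : Fin ℓ → ℂ}

theorem comp {k : ℕ} (h : IsGeneric q x) {φ : Fin k → Fin ℓ}
    (hφ : Function.Injective φ) : IsGeneric q (x ∘ φ) where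
  base_ne_zero := h.base_ne_zero
  ne_zero r := h.ne_zero (φ r)
  div_mul_zpow_ne_one _ _ e hrs := h.div_mul_zpow_ne_one _ _ e (hrs.imp_left hφ.ne)
  mul_mul_zpow_ne_one _ _ e he hrs := h.mul_mul_zpow_ne_one _ _ e he (hrs.imp_left hφ.ne)

theorem injective_nodes (h : IsGeneric q x) :
    Function.Injective fun b : (_ : Fin ℓ) × ℕ => x b.1 * q ^ b.2 := by
  rintro ⟨r, k⟩ ⟨s, l⟩ hkl
  by_contra hne
  refine h.div_mul_zpow_ne_one r s (k - l) (by grind) ?_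
  have := h.ne_zero s
  have := h.base_ne_zero
  simp only at hkl
  rw [zpow_sub₀ h.base_ne_zero, zpow_natCast, zpow_natCast]
  field_simp
  rw [hkl]

theorem one_sub_ne_zero (h : IsGeneric q x) {r s : Fin ℓ} (hrs : r ≠ s) {e : ℤ} (he : 0 ≤ e) :
    1 - x r * x s * q ^ e ≠ 0 :=
  sub_ne_zero.2 (h.mul_mul_zpow_ne_one r s e he (.inl hrs)).symm

end IsGeneric

section FixedCoordinate

variable {ℓ : ℕ} {q : ℂ}

theorem summandFactor_mul_swap_of_eq {x : Fin ℓ → ℂ} (hg : IsGeneric q x) {i j y : Fin ℓ → ℕ}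
    (hjy : j ≤ y) (hyi : y ≤ i) {p r : Fin ℓ} (hrp : r ≠ p) (hp : i p = j p) :
    summandFactor q x i j y r p * summandFactor q x i j y p r =
      (qProd (x r / x p) q (Ioc ((j r : ℤ) - j p) (i r - j p)))⁻¹ *
        (qProd (x r * x p) q (Ioc ((j r : ℤ) + j p) (i r + j p)))⁻¹ := by
  have hyp : y p = j p := le_antisymm (hp ▸ hyi p) (hjy p)
  have hjm : (j r : ℤ) ≤ y r := Int.ofNat_le.2 (hjy r)
  have hmi : (y r : ℤ) ≤ i r := Int.ofNat_le.2 (hyi r)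
  rw [← ratioPair_right_self _ hjm hmi, ← inv_prodPair_right_self_mul hjm hmi
    (hg.one_sub_ne_zero hrp (by positivity))]
  rcases hrp.lt_or_gt with h | h <;>
    simp [summandFactor, hp, hyp, h, h.not_gt, ratioPair_self, prodPair_self, mul_comm (x p) (x r),
      add_comm (j p : ℤ), mul_assoc]

theorem summandFactor_self_of_eq {x : Fin ℓ → ℂ} {i j y : Fin ℓ → ℕ} {p : Fin ℓ}
    (hp : i p = j p) (hyp : y p = j p) : summandFactor q x i j y p p = 1 := by
  simp [summandFactor, hp, hyp, ratioPair_self, prodPair_self]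

theorem proportionalOn_MCstar_mul_MC_removeNth {x : Fin (ℓ + 1) → ℂ} (hg : IsGeneric q x)
    {i j : Fin (ℓ + 1) → ℕ} {p : Fin (ℓ + 1)} (hp : i p = j p) :
    ProportionalOn (Icc j i) (fun y => MCstar (ℓ + 1) q x i y * MC (ℓ + 1) q x y j) fun y =>
      MCstar ℓ q (p.removeNth x) (p.removeNth i) (p.removeNth y) *
        MC ℓ q (p.removeNth x) (p.removeNth y) (p.removeNth j) := by
  refine ⟨∏ r, (qProd (x (p.succAbove r) / x p) q
      (Ioc ((j (p.succAbove r) : ℤ) - j p) (i (p.succAbove r) - j p)))⁻¹ *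
    (qProd (x (p.succAbove r) * x p) q
      (Ioc ((j (p.succAbove r) : ℤ) + j p) (i (p.succAbove r) + j p)))⁻¹, fun y hy => ?_⟩
  obtain ⟨hjy, hyi⟩ := mem_Icc.1 hy
  have hjy' : p.removeNth j ≤ p.removeNth y := fun r => hjy _
  have hyi' : p.removeNth y ≤ p.removeNth i := fun r => hyi _
  have hyp : y p = j p := le_antisymm (hp ▸ hyi p) (hjy p)
  have factor_removeNth (r s : Fin ℓ) :
      summandFactor q (p.removeNth x) (p.removeNth i) (p.removeNth j) (p.removeNth y) r s =
        summandFactor q x i j y (p.succAbove r) (p.succAbove s) := by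
    simp [summandFactor, Fin.removeNth]
  beta_reduce
  rw [MCstar_mul_MC_eq hg.base_ne_zero x hjy hyi, MCstar_mul_MC_eq hg.base_ne_zero _ hjy' hyi',
    prod_prod_succAbove _ p, summandFactor_self_of_eq hp hyp, Fin.sum_univ_succAbove _ p, hp, hyp,
    tsub_self, zero_add, one_mul, mul_assoc]
  simp only [factor_removeNth, Fin.removeNth,
    summandFactor_mul_swap_of_eq hg hjy hyi (p.succAbove_ne _) hp]

theorem sum_Icc_removeNth {M : Type*} [AddCommMonoid M] {i j : Fin (ℓ + 1) → ℕ}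
    {p : Fin (ℓ + 1)} (hp : i p = j p) (g : (Fin ℓ → ℕ) → M) :
    ∑ y ∈ Icc j i, g (p.removeNth y) = ∑ z ∈ Icc (p.removeNth j) (p.removeNth i), g z := by
  refine sum_nbij' p.removeNth (p.insertNth (α := fun _ => ℕ) (j p))
    (fun y hy => ?_) (fun z hz => ?_) (fun y hy => ?_) (fun z _ => ?_) fun _ _ => rfl
  · obtain ⟨hjy, hyi⟩ := mem_Icc.1 hy
    exact mem_Icc.2 ⟨fun r => hjy _, fun r => hyi _⟩
  · rw [← mem_coe, coe_Icc, Fin.insertNth_mem_Icc, hp]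
    exact ⟨Set.left_mem_Icc.2 le_rfl, mem_Icc.1 hz⟩
  · obtain ⟨hjy, hyi⟩ := mem_Icc.1 hy
    rw [← le_antisymm (hp ▸ hyi p) (hjy p), Fin.insertNth_self_removeNth]
  · exact Fin.removeNth_insertNth ..

end FixedCoordinate

section Nondegenerate

open Polynomial

variable {ℓ : ℕ} {q : ℂ} {x : Fin ℓ → ℂ} {i j : Fin ℓ → ℕ}

theorem proportionalOn_ratioPair (hg : IsGeneric q x) :
    ProportionalOn (Icc j i)
      (fun y => (∏ r, ∏ s, (ratioPair (x r / x s) q (i r) (j r) (j s) (y r) (y s))⁻¹) *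
        ((-1) ^ (∑ r, (i r - y r)) * q ^ (∑ r, (i r - y r)).choose 2))
      fun y => (∏ r, (∏ k ∈ (Icc (j r) (i r)).erase (y r), (x r * q ^ y r - x r * q ^ k))⁻¹) *
        ∏ r, ∏ s ∈ Ioi r, (x s * q ^ y s - x r * q ^ y r) /
          ((∏ k ∈ Icc (j s) (i s), (x r * q ^ y r - x s * q ^ k)) *
            ∏ k ∈ Icc (j r) (i r), (x s * q ^ y s - x r * q ^ k)) := by
  have regroup (y : Fin ℓ → ℕ) :
      (∏ r, ∏ s, (ratioPair (x r / x s) q (i r) (j r) (j s) (y r) (y s))⁻¹) *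
          ((-1) ^ (∑ r, (i r - y r)) * q ^ (∑ r, (i r - y r)).choose 2) =
        (∏ r, (ratioPair 1 q (i r) (j r) (j r) (y r) (y r))⁻¹ *
          ((-1) ^ (i r - y r) * q ^ (i r - y r).choose 2)) *
        ∏ r, ∏ s ∈ Ioi r, (ratioPair (x r / x s) q (i r) (j r) (j s) (y r) (y s) *
          ratioPair (x s / x r) q (i s) (j s) (j r) (y s) (y r))⁻¹ *
            q ^ ((i r - y r) * (i s - y s)) := by
    rw [prod_prod_eq_prod_diag_mul_prod_Ioi, neg_one_pow_sum_mul_pow_choose, mul_mul_mul_comm]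
    simp only [← prod_mul_distrib, mul_inv, div_self (hg.ne_zero _)]
  simp only [regroup]
  refine .mul (.prod fun r _ => ⟨∏ k ∈ Ico (j r) (i r), -(x r * q ^ k), fun y hy => ?_⟩)
    (.prod fun r _ => .prod fun s hs => ?_)
  · exact inv_ratioPair_one_mul_neg_one_pow hg.base_ne_zero (hg.ne_zero r) ((mem_Icc.1 hy).1 r)
      ((mem_Icc.1 hy).2 r)
  · have ratio_ne (e : ℤ) := hg.div_mul_zpow_ne_one r s e (.inl (mem_Ioi.1 hs).ne)
    obtain ⟨c, hc⟩ := inv_ratioPair_mul_ratioPair_mul_pow hg.base_ne_zero (hg.ne_zero r)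
      (hg.ne_zero s) ratio_ne (i r) (j r) (i s) (j s)
    exact ⟨c, fun y hy => hc _ _ (mem_Icc.2 ⟨(mem_Icc.1 hy).1 r, (mem_Icc.1 hy).2 r⟩)
      (mem_Icc.2 ⟨(mem_Icc.1 hy).1 s, (mem_Icc.1 hy).2 s⟩)⟩

/-- The polynomial whose values at the nodes `x r * q ^ y r` collect the `q`-shifted factorials with
parameters `x r * x s` in a summand of the orthogonality relation. -/
noncomputable def nodePolynomial (q : ℂ) (x : Fin ℓ → ℂ) (i j : Fin ℓ → ℕ) : ℂ[X] :=
  ∏ s, ∏ k ∈ Ioo (j s) (i s), (1 - C (x s * q ^ k) * X)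

theorem natDegree_nodePolynomial_le (q : ℂ) (x : Fin ℓ → ℂ) (i j : Fin ℓ → ℕ) :
    (nodePolynomial q x i j).natDegree ≤ ∑ s, (i s - j s - 1) := by
  refine (natDegree_prod_le _ _).trans (sum_le_sum fun s _ => ?_)
  refine (natDegree_prod_le _ _).trans ((sum_le_card_nsmul _ _ 1 fun k _ => ?_).trans_eq ?_)
  · compute_degree
  · simp

theorem eval_nodePolynomial (a : ℂ) :
    (nodePolynomial q x i j).eval a =
      ∏ s, ∏ k ∈ Ioo (j s) (i s), (1 - a * (x s * q ^ k)) := by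
  simp [nodePolynomial, eval_prod, mul_comm a]

theorem proportionalOn_prodPair (hg : IsGeneric q x) (hji : ∀ s, j s < i s) :
    ProportionalOn (Icc j i)
      (fun y => ∏ r, ∏ s, (prodPair (x r * x s) q (i r) (j r) (i s) (j s) (y r))⁻¹)
      fun y => ∏ r, (nodePolynomial q x i j).eval (x r * q ^ y r) := by
  simp only [eval_nodePolynomial]
  refine .prod fun r _ => .prod fun s _ =>
    ⟨(qProd (x r * x s) q (Ioo ((j r : ℤ) + j s) (i r + i s)))⁻¹, fun y hy => ?_⟩
  exact inv_prodPair_mul hg.base_ne_zero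
    (fun e he => hg.mul_mul_zpow_ne_one r s e he.le (.inr he.ne')) ((mem_Icc.1 hy).1 r)
    ((mem_Icc.1 hy).2 r) (hji s)

theorem proportionalOn_one_sub (hq : q ≠ 0) (S : Finset (Fin ℓ → ℕ)) :
    ProportionalOn S
      (fun y => ∏ r, ∏ s, if r < s then
        (1 - x r * x s * q ^ ((y r : ℤ) + y s)) / (1 - x r * x s * q ^ ((i r : ℤ) + i s)) else 1)
      fun y => ∏ r, ∏ s ∈ Ioi r, (1 - x r * q ^ y r * (x s * q ^ y s)) := by
  simp only [prod_prod_ite_lt]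
  refine .prod fun r _ => .prod fun s _ =>
    ⟨(1 - x r * x s * q ^ ((i r : ℤ) + i s))⁻¹, fun y _ => ?_⟩
  beta_reduce
  rw [zpow_add₀ hq (y r), zpow_natCast, zpow_natCast]
  ring

theorem proportionalOn_MCstar_mul_MC_of_forall_lt (hg : IsGeneric q x) (hji : ∀ s, j s < i s) :
    ProportionalOn (Icc j i) (fun y => MCstar ℓ q x i y * MC ℓ q x y j) fun y =>
      (∏ r, (nodePolynomial q x i j).eval (x r * q ^ y r) /
        ∏ b ∈ (univ.sigma fun s => Icc (j s) (i s)).erase ⟨r, y r⟩,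
          (x r * q ^ y r - x b.1 * q ^ b.2)) *
      ∏ r, ∏ s ∈ Ioi r,
        (x s * q ^ y s - x r * q ^ y r) * (1 - x r * q ^ y r * (x s * q ^ y s)) := by
  obtain ⟨c, hc⟩ := ((proportionalOn_ratioPair hg).mul (proportionalOn_prodPair hg hji)).mul
    (proportionalOn_one_sub (x := x) (i := i) hg.base_ne_zero (Icc j i))
  refine ⟨c, fun y hy => ?_⟩
  have collect_nodes := prod_inv_mul_prod_div_eq_prod_erase_sigma (T := fun s => Icc (j s) (i s))
    (fun b : (_ : Fin ℓ) × ℕ => x b.1 * q ^ b.2) y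
  have summand_eq := hc y hy
  beta_reduce at collect_nodes summand_eq ⊢
  rw [collect_nodes] at summand_eq
  rw [MCstar_mul_MC_eq hg.base_ne_zero x (mem_Icc.1 hy).1 (mem_Icc.1 hy).2]
  simp only [summandFactor, prod_mul_distrib, div_eq_mul_inv] at summand_eq ⊢
  linear_combination summand_eq

theorem sum_MCstar_mul_MC_eq_zero_of_forall_lt (hg : IsGeneric q x) (hℓ : 0 < ℓ)
    (hji : ∀ s, j s < i s) :
    ∑ y ∈ Icc j i, MCstar ℓ q x i y * MC ℓ q x y j = 0 := by
  refine (proportionalOn_MCstar_mul_MC_of_forall_lt hg hji).sum_eq_zero ?_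
  rw [Pi.Icc_eq]
  refine sum_transversals_eq_zero hℓ (v := fun b => x b.1 * q ^ b.2) hg.injective_nodes.injOn ?_
  have card_eq : ∑ s, #(Icc (j s) (i s)) = ∑ s, (i s - j s - 1) + 2 * ℓ := by
    rw [mul_comm, ← smul_eq_mul, ← Fin.sum_const, ← sum_add_distrib]
    refine sum_congr rfl fun s _ => ?_
    have := hji s
    rw [Nat.card_Icc]
    omega
  have := natDegree_nodePolynomial_le q x i j
  omega

end Nondegenerate

theorem sum_MCstar_mul_MC_eq_zero {ℓ : ℕ} {q : ℂ} {x : Fin ℓ → ℂ} (hg : IsGeneric q x)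
    {i j : Fin ℓ → ℕ} (hji : j < i) : ∑ y ∈ Icc j i, MCstar ℓ q x i y * MC ℓ q x y j = 0 := by
  induction ℓ with
  | zero => exact absurd (Subsingleton.elim j i) hji.ne
  | succ ℓ ih =>
    by_cases hp : ∃ p, i p = j p
    · obtain ⟨p, hp⟩ := hp
      refine (proportionalOn_MCstar_mul_MC_removeNth hg hp).sum_eq_zero ?_
      rw [sum_Icc_removeNth hp fun z => MCstar ℓ q (p.removeNth x) (p.removeNth i) z *
        MC ℓ q (p.removeNth x) z (p.removeNth j)]
      refine ih (hg.comp p.succAbove_right_injective) ?_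
      obtain ⟨hle, r, hr⟩ := Pi.lt_def.1 hji
      have hrp : r ≠ p := by
        rintro rfl
        exact hr.ne' hp
      obtain ⟨s, rfl⟩ := Fin.exists_succAbove_eq hrp
      exact Pi.lt_def.2 ⟨fun s => hle _, s, hr⟩
    · push Not at hp
      exact sum_MCstar_mul_MC_eq_zero_of_forall_lt hg ℓ.succ_pos
        fun s => (hji.le s).lt_of_ne (hp s).symm

theorem MCstar_mul_MC_self {ℓ : ℕ} {q : ℂ} {x : Fin ℓ → ℂ} (hg : IsGeneric q x)
    (i : Fin ℓ → ℕ) : MCstar ℓ q x i i * MC ℓ q x i i = 1 := by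
  rw [MCstar_mul_MC_eq hg.base_ne_zero x le_rfl le_rfl]
  have factor_eq_one (r s : Fin ℓ) : summandFactor q x i i i r s = 1 := by
    rw [summandFactor, ratioPair_self, prodPair_self]
    split_ifs with hrs
    · simp [div_self (hg.one_sub_ne_zero hrs.ne (by positivity : (0 : ℤ) ≤ i r + i s))]
    · simp
  simp [factor_eq_one]

theorem mul_zpow_ne_one_of_qp_ne_zero {q a : ℂ} (hq : q ≠ 0) {k l e : ℤ}
    (h : qp (q * a * q ^ k) q (l - k) ≠ 0) (he : e ∈ Ioc k l) : a * q ^ e ≠ 1 := by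
  obtain ⟨hke, hel⟩ := mem_Ioc.1 he
  rw [qp_mul_mul_zpow hq a (hke.le.trans hel)] at h
  exact (sub_ne_zero.1 (prod_ne_zero_iff.1 h e he)).symm

section Genericity

variable {ℓ : ℕ} {q : ℂ} {x : Fin ℓ → ℂ}

theorem div_mul_zpow_ne_one_of_qp_ne_zero (hq : q ≠ 0) (hx : ∀ r, x r ≠ 0)
    (hd : ∀ i j : Fin ℓ → ℕ, (∀ k, j k ≤ i k) → ∀ r s : Fin ℓ,
      qp (q * (x r / x s) * q ^ ((j r : ℤ) - (j s : ℤ))) q ((i r : ℤ) - (j r : ℤ)) ≠ 0)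
    (r s : Fin ℓ) (e : ℤ) (hrs : r ≠ s ∨ e ≠ 0) : x r / x s * q ^ e ≠ 1 := by
  have of_mem {i j : Fin ℓ → ℕ} (hji : ∀ k, j k ≤ i k) (s : Fin ℓ) {e : ℤ}
      (he : e ∈ Ioc ((j r : ℤ) - j s) (i r - j s)) : x r / x s * q ^ e ≠ 1 :=
    mul_zpow_ne_one_of_qp_ne_zero hq
      (by simpa only [sub_sub_sub_cancel_right] using hd i j hji r s) he
  have of_pos {e : ℤ} (he : 0 < e) : x r / x r * q ^ e ≠ 1 :=
    of_mem (i := fun _ => e.toNat) (j := 0) (fun _ => Nat.zero_le _) r (by simp; omega)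
  by_cases h : r = s
  · subst h
    rcases (hrs.resolve_left (not_not.2 rfl)).lt_or_gt with he | he
    · simpa [div_self (hx r)] using of_pos (neg_pos.2 he)
    · exact of_pos he
  · refine of_mem (i := fun t => if t = r then (e - 1).toNat + 1 else (1 - e).toNat)
      (j := fun t => if t = r then (e - 1).toNat else (1 - e).toNat) (by grind) s ?_
    simp only [if_true, if_neg (Ne.symm h), mem_Ioc]
    omega

theorem mul_mul_zpow_ne_one_of_one_sub_ne_zero
    (hd : ∀ (i : Fin ℓ → ℕ) (r s : Fin ℓ), r < s →
      (1 : ℂ) - x r * x s * q ^ ((i r : ℤ) + (i s : ℤ)) ≠ 0)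
    {r s : Fin ℓ} (hrs : r ≠ s) {e : ℤ} (he : 0 ≤ e) : x r * x s * q ^ e ≠ 1 := by
  wlog h : r < s generalizing r s
  · rw [mul_comm (x r)]
    exact this hrs.symm (hrs.lt_or_gt.resolve_left h)
  · exact (sub_ne_zero.1 (by simpa [hrs.symm, he] using hd (Pi.single r e.toNat) r s h)).symm

theorem mul_self_mul_zpow_ne_one_of_qp_ne_zero (hq : q ≠ 0)
    (hd : ∀ i j : Fin ℓ → ℕ, (∀ k, j k ≤ i k) → ∀ r s : Fin ℓ,
      qp (q * (x r * x s) * q ^ ((j r : ℤ) + (j s : ℤ))) q ((i r : ℤ) - (j r : ℤ)) ≠ 0)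
    (r : Fin ℓ) {e : ℤ} (he : 0 < e) : x r * x r * q ^ e ≠ 1 :=
  mul_zpow_ne_one_of_qp_ne_zero (l := e) hq
    (by simpa [he.le] using hd (fun _ => e.toNat) 0 (fun _ => Nat.zero_le _) r r)
    (mem_Ioc.2 ⟨he, le_rfl⟩)

theorem isGeneric_of_denominators_ne_zero (hq : q ≠ 0) (hx : ∀ r, x r ≠ 0)
    (hd1 : ∀ i j : Fin ℓ → ℕ, (∀ k, j k ≤ i k) → ∀ r s : Fin ℓ,
      qp (q * (x r / x s) * q ^ ((j r : ℤ) - (j s : ℤ))) q ((i r : ℤ) - (j r : ℤ)) ≠ 0)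
    (hd2 : ∀ i j : Fin ℓ → ℕ, (∀ k, j k ≤ i k) → ∀ r s : Fin ℓ,
      qp (q * (x r * x s) * q ^ ((j r : ℤ) + (j s : ℤ))) q ((i r : ℤ) - (j r : ℤ)) ≠ 0)
    (hd4 : ∀ (i : Fin ℓ → ℕ) (r s : Fin ℓ), r < s →
      (1 : ℂ) - x r * x s * q ^ ((i r : ℤ) + (i s : ℤ)) ≠ 0) : IsGeneric q x where
  base_ne_zero := hq
  ne_zero := hx
  div_mul_zpow_ne_one := div_mul_zpow_ne_one_of_qp_ne_zero hq hx hd1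
  mul_mul_zpow_ne_one r s e he hrs := by
    by_cases h : r = s
    · subst h
      exact mul_self_mul_zpow_ne_one_of_qp_ne_zero hq hd2 r
        (he.lt_of_ne' (hrs.resolve_left (not_not.2 rfl)))
    · exact mul_mul_zpow_ne_one_of_one_sub_ne_zero hd4 h he

end Genericity

/-- **C_ℓ Bailey Transform, second orthogonality relation.**
For generic parameters, `∑_{j ≤ y ≤ i} M*(i;y) M(y;j) = ∏_k δ(i_k, j_k)`. -/
theorem Cl_bailey_transform_second (ℓ : ℕ) (hℓ : 1 ≤ ℓ) (q : ℂ)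
    (hq : q ≠ 0) (x : Fin ℓ → ℂ) (hx : ∀ k, x k ≠ 0)
    (hd1 : ∀ i j : Fin ℓ → ℕ, (∀ k, j k ≤ i k) → ∀ r s : Fin ℓ,
      qp (q * (x r / x s) * q ^ ((j r : ℤ) - (j s : ℤ))) q ((i r : ℤ) - (j r : ℤ)) ≠ 0)
    (hd2 : ∀ i j : Fin ℓ → ℕ, (∀ k, j k ≤ i k) → ∀ r s : Fin ℓ,
      qp (q * (x r * x s) * q ^ ((j r : ℤ) + (j s : ℤ))) q ((i r : ℤ) - (j r : ℤ)) ≠ 0)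
    (hd3 : ∀ i j : Fin ℓ → ℕ, (∀ k, j k ≤ i k) → ∀ r s : Fin ℓ,
      qp ((x r * x s) * q ^ ((j r : ℤ) + (i s : ℤ))) q ((i r : ℤ) - (j r : ℤ)) ≠ 0)
    (hd4 : ∀ (i : Fin ℓ → ℕ) (r s : Fin ℓ), r < s →
      (1 : ℂ) - x r * x s * q ^ ((i r : ℤ) + (i s : ℤ)) ≠ 0) :
    ∀ i j : Fin ℓ → ℕ,
      ∑ y ∈ Finset.Icc j i, MCstar ℓ q x i y * MC ℓ q x y j =
        ∏ k, (if i k = j k then (1 : ℂ) else 0) := by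
  intro i j
  have hg := isGeneric_of_denominators_ne_zero hq hx hd1 hd2 hd4
  rw [Fintype.prod_boole]
  by_cases hij : i = j
  · subst hij
    rw [Icc_self, sum_singleton, MCstar_mul_MC_self hg, if_pos fun _ => rfl]
  rw [if_neg (mt funext hij)]
  by_cases hji : j ≤ i
  · exact sum_MCstar_mul_MC_eq_zero hg (hji.lt_of_ne (Ne.symm hij))
  · rw [Icc_eq_empty hji, sum_empty]
end
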